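/- Let g be a Lie algebra over a field of characteristic zero and h ⊂ g a finite-dimensional subalgebra admitting an ad(h)-invariant complement. Then the characteristic homomorphism χ_W: (S^j h)^{*h} → H^{2j}(W(g,h)), χ_W(P) = class of (1/j!)(id⊗P)(F^j), is an isomorphism for every j ≥ 0; moreover its composition with the map H^·(W(g,h)) → H^·(g,h) induced by the canonical projection W(g,h) → C^·(g,h) sends P ∈ (S^j h)^{*h} to the class of the relative cocycle χ(P)(v_1∧⋯∧v_{2j}) = (1/j!)∑'_σ sign(σ) P(C(v_{σ(1)},v_{σ(2)}),…,C(v_{σ(2j−1)},v_{σ(2j)})), where C(v,w) = [pr(v),pr(w)] − pr([v,w]) for any ad(h)-equivariant projection pr: g → h and the sum ∑' is over σ ∈ S_{2j} with σ(2i−1) < σ(2i) for all i; in particular this cohomology class is independent of the choice of pr. -/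

import Mathlib

noncomputable section

section Weil

variable (F : Type*) [Field F] (g : Type*) [LieRing g] [LieAlgebra F g]

/-- The tuple `(br, v_0, …, v̂_i, …, v̂_j, …, v_d)` (`i < j`) used in the
Chevalley–Eilenberg differential. -/
def pairTupleW {G : Type*} (d : ℕ) (v : Fin (d+1) → G) (br : G) (i j : Fin (d+1)) :
    Fin d → G :=
  fun m =>
    if hm : m.1 = 0 then br
    else if h1 : m.1 - 1 < i.1 then v ⟨m.1 - 1, by have := i.2; omega⟩
    else if h2 : m.1 < j.1 then v ⟨m.1, by have := j.2; omega⟩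
    else v ⟨m.1 + 1, by have := m.2; omega⟩

/-- The (relative) Chevalley–Eilenberg differential `d_Lie` on cochains with values in
`(S^j g)^*` (coadjoint action extended to the symmetric power). -/
def dLieS (k j : ℕ) (c : (Fin k → g) → (Fin j → g) → F) :
    (Fin (k+1) → g) → (Fin j → g) → F :=
  fun v w =>
    (∑ i : Fin (k+1), (-1:F)^(i.1+1) *
      ∑ r : Fin j, c (v ∘ i.succAbove) (Function.update w r ⁅v i, w r⁆))
    + ∑ i : Fin (k+1), ∑ l : Fin (k+1),
        (if i < l then (-1:F)^(i.1+l.1) * c (pairTupleW k v ⁅v i, v l⁆ i l) w else 0)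

/-- The Koszul piece `d'` of the Weil differential:
`d'c(v ⊗ w_1⋯w_{j+1}) = ∑_k c(π(w_k)∧v ⊗ w_1⋯ŵ_k⋯w_{j+1})`. -/
def dKoszul (i j : ℕ) (c : (Fin (i+1) → g) → (Fin j → g) → F) :
    (Fin i → g) → (Fin (j+1) → g) → F :=
  fun v w => ∑ r : Fin (j+1), c (Fin.cons (w r) v) (w ∘ r.succAbove)

variable (h : LieSubalgebra F g)

/-- An element of `W^{i,j}(g,h) = (Λ^i(g/h)⊗S^j g)^{*h}`: a functional, multilinear and
alternating in the first block, multilinear and symmetric in the second block, vanishing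
whenever a first-block argument lies in `h`, and `h`-invariant. -/
def IsWCochain (i j : ℕ) (c : (Fin i → g) → (Fin j → g) → F) : Prop :=
  (∀ (v : Fin i → g) (t : Fin i) (x y : g) (w : Fin j → g),
      c (Function.update v t (x + y)) w
        = c (Function.update v t x) w + c (Function.update v t y) w) ∧
  (∀ (v : Fin i → g) (t : Fin i) (s : F) (x : g) (w : Fin j → g),
      c (Function.update v t (s • x)) w = s * c (Function.update v t x) w) ∧
  (∀ (v : Fin i → g) (t t' : Fin i) (w : Fin j → g), t ≠ t' → v t = v t' → c v w = 0) ∧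
  (∀ (v : Fin i → g) (w : Fin j → g) (r : Fin j) (x y : g),
      c v (Function.update w r (x + y))
        = c v (Function.update w r x) + c v (Function.update w r y)) ∧
  (∀ (v : Fin i → g) (w : Fin j → g) (r : Fin j) (s : F) (x : g),
      c v (Function.update w r (s • x)) = s * c v (Function.update w r x)) ∧
  (∀ (v : Fin i → g) (w : Fin j → g) (ρ : Equiv.Perm (Fin j)), c v (w ∘ ρ) = c v w) ∧
  (∀ (v : Fin i → g) (t : Fin i) (w : Fin j → g), v t ∈ h → c v w = 0) ∧
  (∀ X ∈ h, ∀ (v : Fin i → g) (w : Fin j → g),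
      (∑ t : Fin i, c (Function.update v t ⁅X, v t⁆) w)
        + (∑ r : Fin j, c v (Function.update w r ⁅X, w r⁆)) = 0)

/-- An element of the relative Weil algebra `W(g,h)` of total degree `m`, presented by its
components `W i j ∈ W^{i,j}(g,h)` (`i + 2j = m`, the other components being zero). -/
def IsWElt (m : ℕ) (W : ∀ i j : ℕ, (Fin i → g) → (Fin j → g) → F) : Prop :=
  (∀ i j, IsWCochain F g h i j (W i j)) ∧ (∀ i j, i + 2*j ≠ m → W i j = 0)

/-- The Weil differential `d = d_Lie + d'`. -/
def dWeil (W : ∀ i j : ℕ, (Fin i → g) → (Fin j → g) → F) :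
    ∀ i j : ℕ, (Fin i → g) → (Fin j → g) → F :=
  fun i j =>
    (match i with
     | 0 => 0
     | (i'+1) => dLieS F g i' j (W i' j)) +
    (match j with
     | 0 => 0
     | (j'+1) => dKoszul F g i j' (W (i+1) j'))

/-- `W` is a coboundary in the relative Weil algebra (in total degree `m`). -/
def IsWCobd : (m : ℕ) → (∀ i j : ℕ, (Fin i → g) → (Fin j → g) → F) → Prop
  | 0, W => ∀ i j, W i j = 0
  | (m'+1), W => ∃ W', IsWElt F g h m' W' ∧ dWeil F g W' = W

/-- An (extension to `g` of an) invariant polynomial `Q ∈ (S^j h)^{*h}`: a symmetric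
multilinear form, `ad h`-invariant on `h`-tuples. -/
def IsSymPoly (j : ℕ) (Q : (Fin j → g) → F) : Prop :=
  (∀ (w : Fin j → g) (r : Fin j) (x y : g),
      Q (Function.update w r (x + y))
        = Q (Function.update w r x) + Q (Function.update w r y)) ∧
  (∀ (w : Fin j → g) (r : Fin j) (s : F) (x : g),
      Q (Function.update w r (s • x)) = s * Q (Function.update w r x)) ∧
  (∀ (w : Fin j → g) (ρ : Equiv.Perm (Fin j)), Q (w ∘ ρ) = Q w) ∧
  (∀ X ∈ h, ∀ w : Fin j → g, (∀ r, w r ∈ h) →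
      ∑ r : Fin j, Q (Function.update w r ⁅X, w r⁆) = 0)

end Weil

section ChernWeil

variable (F : Type*) [Field F] (g : Type*) [LieRing g] [LieAlgebra F g]

/-- `pr` is an `ad(h)`-equivariant projection of `g` onto `h`. -/
def IsEqProj (h : LieSubalgebra F g) (pr : g →ₗ[F] g) : Prop :=
  (∀ x, pr x ∈ h) ∧ (∀ x ∈ h, pr x = x) ∧ (∀ X ∈ h, ∀ v, pr ⁅X, v⁆ = ⁅X, pr v⁆)

/-- The curvature `C(x,y) = [pr x, pr y] − pr [x,y]` of the connection associated with an
equivariant projection `pr`. -/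
def curvW (pr : g →ₗ[F] g) (x y : g) : g := ⁅pr x, pr y⁆ - pr ⁅x, y⁆

/-- The characteristic homomorphism `χ_W(P) = (1/j!)(id⊗P)(F^j)`, written out in its
components in `W^{2k,j−k}(g,h)`:
`χ_W(P)^{(k)}(v_1,…,v_{2k})(w_1,…,w_{j−k}) = (1/k!)∑'_σ sign σ
P(C(v_{σ(1)},v_{σ(2)}),…,C(v_{σ(2k−1)},v_{σ(2k)}), pr(w_1),…,pr(w_{j−k}))`. -/
def chiW (pr : g →ₗ[F] g) (j : ℕ) (P : (Fin j → g) → F) :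
    ∀ i j' : ℕ, (Fin i → g) → (Fin j' → g) → F :=
  fun i j' v w =>
    if hc : i % 2 = 0 ∧ i / 2 + j' = j then
      (((i/2).factorial : F))⁻¹ *
      ∑ σ : Equiv.Perm (Fin i),
        (if (∀ t : Fin (i/2),
              σ ⟨2*t.1, by have := t.2; have := hc.1; omega⟩
                < σ ⟨2*t.1+1, by have := t.2; have := hc.1; omega⟩) then
          (Equiv.Perm.sign σ : ℤ) • P (fun t : Fin j =>
            if ht : t.1 < i/2 then
              curvW F g pr
                (v (σ ⟨2*t.1, by have := hc.1; omega⟩))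
                (v (σ ⟨2*t.1+1, by have := hc.1; omega⟩))
            else pr (w ⟨t.1 - i/2, by have := hc.2; have := t.2; omega⟩))
        else 0)
    else 0

/-- The explicit Chern–Weil relative cocycle `χ(P)(v_1∧⋯∧v_{2j}) = (1/j!)∑'_σ sign σ
P(C(v_{σ(1)},v_{σ(2)}),…,C(v_{σ(2j−1)},v_{σ(2j)}))`, the sum over `σ ∈ S_{2j}` with
`σ(2i−1) < σ(2i)`. -/
def chernW (pr : g →ₗ[F] g) (j : ℕ) (P : (Fin j → g) → F) (v : Fin (2*j) → g) : F :=
  ((j.factorial : F))⁻¹ *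
    ∑ σ : Equiv.Perm (Fin (2*j)),
      if (∀ t : Fin j, σ ⟨2*t.1, by have := t.2; omega⟩ < σ ⟨2*t.1+1, by have := t.2; omega⟩)
      then (Equiv.Perm.sign σ : ℤ) •
        P (fun t : Fin j => curvW F g pr
            (v (σ ⟨2*t.1, by have := t.2; omega⟩))
            (v (σ ⟨2*t.1+1, by have := t.2; omega⟩)))
      else 0

/-- Relative Lie algebra cochain with trivial coefficients: multilinear, alternating,
vanishing if an argument lies in `h`, and `h`-invariant. -/
def IsRelTrivW (h : LieSubalgebra F g) (k : ℕ) (c : (Fin k → g) → F) : Prop :=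
  (∀ (v : Fin k → g) (t : Fin k) (x y : g),
      c (Function.update v t (x + y))
        = c (Function.update v t x) + c (Function.update v t y)) ∧
  (∀ (v : Fin k → g) (t : Fin k) (s : F) (x : g),
      c (Function.update v t (s • x)) = s * c (Function.update v t x)) ∧
  (∀ (v : Fin k → g) (t t' : Fin k), t ≠ t' → v t = v t' → c v = 0) ∧
  (∀ (v : Fin k → g) (t : Fin k), v t ∈ h → c v = 0) ∧
  (∀ X ∈ h, ∀ v : Fin k → g, ∑ t : Fin k, c (Function.update v t ⁅X, v t⁆) = 0)

/-- The Chevalley–Eilenberg differential with trivial coefficients. -/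
def dTrivW (k : ℕ) (c : (Fin k → g) → F) : (Fin (k+1) → g) → F :=
  fun v =>
    ∑ i : Fin (k+1), ∑ l : Fin (k+1),
      (if i < l then (-1:F)^(i.1+l.1) * c (pairTupleW k v ⁅v i, v l⁆ i l) else 0)

/-- `c` is the coboundary of a relative cochain (trivial coefficients). -/
def IsRelTrivCobdW (h : LieSubalgebra F g) : (k : ℕ) → ((Fin k → g) → F) → Prop
  | 0, c => c = 0
  | (m+1), c => ∃ b, IsRelTrivW F g h m b ∧ c = dTrivW F g m b

end ChernWeil

/-!
Let `N` count the arguments, exterior or symmetric, in the direction of the complement `ker pr`.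
The Koszul homotopy attached to `pr` has commutator `N` with `d'`, so its commutator `L` with the
full differential differs from `N` by terms raising the exterior degree. On basic cochains of degree
`n` the operator `N` is annihilated by `∏ (N - a)`, `1 ≤ a ≤ n`, up to the restriction of the
component in `S h^*`. If this restriction vanishes, some polynomial in `L` with nonzero constant
term kills a given basic cocycle, which is therefore exact. As `χ_W(P)` restricts to `P`, and all
coboundaries restrict to zero, this is the isomorphism. It also shows that the classes of `χ_W(P)`
for two projections agree. That `χ_W(P)` is a cocycle is the Bianchi identity.
-/

/-- The ambient space of the Weil algebra: families of arbitrary functions of `i` exterior and `j`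
symmetric arguments, one for each bidegree `(i, j)`. -/
abbrev WeilFamily (R M : Type*) := ∀ i j : ℕ, (Fin i → M) → (Fin j → M) → R

namespace WeilFamily

section Contractions

variable {R : Type*} [CommRing R] {M : Type*}

/-- Contraction in the exterior variables. -/
def ι (x : M) : WeilFamily R M →ₗ[R] WeilFamily R M where
  toFun c i j v w := c (i + 1) j (Fin.cons x v) w
  map_add' _ _ := rfl
  map_smul' _ _ := rfl

/-- Contraction in the symmetric variables. -/
def κ (x : M) : WeilFamily R M →ₗ[R] WeilFamily R M where
  toFun c i j v w := c i (j + 1) v (Fin.cons x w)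
  map_add' _ _ := rfl
  map_smul' _ _ := rfl

/-- Exterior multiplication `∑ e^a ∧ f e_a` for a function `f` with values in families. -/
def extMul : (M → WeilFamily R M) →ₗ[R] WeilFamily R M where
  toFun f i j := match i with
    | 0 => 0
    | i + 1 => fun v w => ∑ t : Fin (i + 1), (-1) ^ (t : ℕ) * f (v t) i j (t.removeNth v) w
  map_add' f f' := by
    ext i j v w
    cases i <;> simp [mul_add, Finset.sum_add_distrib]
  map_smul' s f := by
    ext i j v w
    cases i <;> simp [Finset.mul_sum, mul_left_comm]

/-- Symmetric multiplication `∑ e^a · f e_a` for a function `f` with values in families. -/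
def symMul : (M → WeilFamily R M) →ₗ[R] WeilFamily R M where
  toFun f i j := match j with
    | 0 => 0
    | j + 1 => fun v w => ∑ r : Fin (j + 1), f (w r) i j v (r.removeNth w)
  map_add' f f' := by
    ext i j v w
    cases j <;> simp [Finset.sum_add_distrib]
  map_smul' s f := by
    ext i j v w
    cases j <;> simp [Finset.mul_sum]

theorem ι_apply (x : M) (c : WeilFamily R M) (i j v w) :
    ι x c i j v w = c (i + 1) j (Fin.cons x v) w := rfl

theorem κ_apply (x : M) (c : WeilFamily R M) (i j v w) :
    κ x c i j v w = c i (j + 1) v (Fin.cons x w) := rfl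

theorem extMul_succ (f : M → WeilFamily R M) (i j v w) :
    extMul f (i + 1) j v w =
      ∑ t : Fin (i + 1), (-1) ^ (t : ℕ) * f (v t) i j (t.removeNth v) w := rfl

theorem symMul_succ (f : M → WeilFamily R M) (i j v w) :
    symMul f i (j + 1) v w = ∑ r : Fin (j + 1), f (w r) i j v (r.removeNth w) := rfl

theorem extMul_zero_left (f : M → WeilFamily R M) (j : ℕ) : extMul f 0 j = 0 := rfl

theorem symMul_zero_right (f : M → WeilFamily R M) (i : ℕ) : symMul f i 0 = 0 := rfl

section Linearity

variable (f f' : M → WeilFamily R M) (s : R)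

theorem extMul_add : (extMul fun y => f y + f' y) = extMul f + extMul f' := map_add extMul f f'

theorem extMul_sub : (extMul fun y => f y - f' y) = extMul f - extMul f' := map_sub extMul f f'

theorem extMul_neg : (extMul fun y => -f y) = -extMul f := map_neg extMul f

theorem extMul_smul : (extMul fun y => s • f y) = s • extMul f := map_smul extMul s f

theorem symMul_add : (symMul fun y => f y + f' y) = symMul f + symMul f' := map_add symMul f f'

theorem symMul_sub : (symMul fun y => f y - f' y) = symMul f - symMul f' := map_sub symMul f f'

theorem symMul_neg : (symMul fun y => -f y) = -symMul f := map_neg symMul f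

theorem symMul_smul : (symMul fun y => s • f y) = s • symMul f := map_smul symMul s f

end Linearity

theorem ι_κ (x y : M) (c : WeilFamily R M) : ι x (κ y c) = κ y (ι x c) := rfl

theorem symMul_apply_eq_zero {f : M → WeilFamily R M} {i : ℕ} (hf : ∀ y j, f y i j = 0) (j : ℕ) :
    symMul f i j = 0 := by
  ext v w
  cases j <;> simp [symMul_zero_right, symMul_succ, hf]

theorem removeNth_succ_cons (x : M) {n : ℕ} (v : Fin (n + 1) → M) (t : Fin (n + 1)) :
    t.succ.removeNth (Fin.cons x v : Fin (n + 2) → M) = Fin.cons x (t.removeNth v) := by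
  ext m
  cases m using Fin.cases <;> simp [Fin.removeNth]

theorem ι_extMul (x : M) (f : M → WeilFamily R M) :
    ι x (extMul f) = f x - extMul fun y => ι x (f y) := by
  ext i j v w
  rw [ι_apply, extMul_succ, Fin.sum_univ_succ]
  cases i with
  | zero => simp [extMul_zero_left]
  | succ i =>
    simp [removeNth_succ_cons, extMul_succ, ι_apply, pow_succ, sub_eq_add_neg]

theorem κ_extMul (x : M) (f : M → WeilFamily R M) :
    κ x (extMul f) = extMul fun y => κ x (f y) := by
  ext i
  cases i <;> rfl

theorem ι_symMul (x : M) (f : M → WeilFamily R M) :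
    ι x (symMul f) = symMul fun y => ι x (f y) := by
  ext i j
  cases j <;> rfl

theorem κ_symMul (x : M) (f : M → WeilFamily R M) :
    κ x (symMul f) = f x + symMul fun y => κ x (f y) := by
  ext i j v w
  rw [κ_apply, symMul_succ, Fin.sum_univ_succ]
  cases j with
  | zero => simp [symMul_zero_right]
  | succ j => simp [removeNth_succ_cons, symMul_succ, κ_apply]

theorem eq_of_ι {α : Type*} {p : α → Prop} {T T' : α → WeilFamily R M}
    (h0 : ∀ a, p a → ∀ j, T a 0 j = T' a 0 j)
    (hι : ∀ a, p a → ∀ x, ∃ b, p b ∧ ι x (T a) - ι x (T' a) = T b - T' b) {a : α} (ha : p a) :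
    T a = T' a := by
  suffices h : ∀ i a, p a → ∀ j, (T a - T' a) i j = 0 by
    ext i j : 2
    exact sub_eq_zero.1 (h i a ha j)
  intro i
  induction i with
  | zero => exact fun a ha j => sub_eq_zero.2 (h0 a ha j)
  | succ i ih =>
    intro a ha j
    ext v w
    obtain ⟨b, hb, hab⟩ := hι a ha (v 0)
    have := congrFun (congrFun (ih b hb j) (Fin.tail v)) w
    rwa [← hab, ← map_sub, ι_apply, Fin.cons_self_tail] at this

theorem eq_of_ι_κ {α : Type*} {p : α → Prop} {T T' : α → WeilFamily R M}
    (h0 : ∀ a, p a → T a 0 0 = T' a 0 0)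
    (hι : ∀ a, p a → ∀ x, ∃ b, p b ∧ ι x (T a) - ι x (T' a) = T b - T' b)
    (hκ : ∀ a, p a → ∀ x, ∃ b, p b ∧ κ x (T a) - κ x (T' a) = T b - T' b) {a : α} (ha : p a) :
    T a = T' a := by
  refine eq_of_ι (fun a ha j => ?_) hι ha
  suffices h : ∀ j a, p a → (T a - T' a) 0 j = 0 from sub_eq_zero.1 (h j a ha)
  intro j
  induction j with
  | zero => exact fun a ha => sub_eq_zero.2 (h0 a ha)
  | succ j ih =>
    intro a ha
    ext v w
    obtain ⟨b, hb, hab⟩ := hκ a ha (w 0)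
    have := congrFun (congrFun (ih b hb) v) (Fin.tail w)
    rwa [← hab, ← map_sub, κ_apply, Fin.cons_self_tail] at this

theorem extMul_extMul (f : M → M → WeilFamily R M) :
    (extMul fun y => extMul fun z => f y z) = -extMul fun z => extMul fun y => f y z := by
  refine eq_of_ι (p := fun _ : M → M → WeilFamily R M => True)
    (T := fun f => extMul fun y => extMul fun z => f y z)
    (T' := fun f => -extMul fun z => extMul fun y => f y z) (fun _ _ _ => neg_zero.symm)
    (fun f _ x => ⟨fun y z => ι x (f y z), trivial, ?_⟩) trivial
  simp only [map_neg, ι_extMul, extMul_sub]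
  abel

theorem symMul_symMul (f : M → M → WeilFamily R M) :
    (symMul fun y => symMul fun z => f y z) = symMul fun z => symMul fun y => f y z := by
  refine eq_of_ι_κ (p := fun _ : M → M → WeilFamily R M => True)
    (T := fun f => symMul fun y => symMul fun z => f y z)
    (T' := fun f => symMul fun z => symMul fun y => f y z) (fun f _ => rfl)
    (fun f _ x => ⟨fun y z => ι x (f y z), trivial, ?_⟩)
    (fun f _ x => ⟨fun y z => κ x (f y z), trivial, ?_⟩) trivial
  · simp only [ι_symMul]
  · simp only [κ_symMul, symMul_add]
    abel

theorem symMul_extMul (f : M → M → WeilFamily R M) :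
    (symMul fun y => extMul fun z => f y z) = extMul fun z => symMul fun y => f y z := by
  refine eq_of_ι (p := fun _ : M → M → WeilFamily R M => True)
    (T := fun f => symMul fun y => extMul fun z => f y z)
    (T' := fun f => extMul fun z => symMul fun y => f y z) (fun f _ j => ?_)
    (fun f _ x => ⟨fun y z => -ι x (f y z), trivial, ?_⟩) trivial
  · ext v w
    cases j <;> simp [extMul_zero_left, symMul_zero_right, symMul_succ]
  · simp only [ι_extMul, ι_symMul, symMul_sub, symMul_neg, extMul_neg]
    abel

/-- The Koszul differential `d'`. -/
def dKos : WeilFamily R M →ₗ[R] WeilFamily R M where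
  toFun c := symMul fun y => ι y c
  map_add' c c' := by simp only [map_add, symMul_add]
  map_smul' s c := by simp only [map_smul, symMul_smul, RingHom.id_apply]

theorem dKos_apply (c : WeilFamily R M) : dKos c = symMul fun y => ι y c := rfl

theorem dKos_extMul (f : M → WeilFamily R M) :
    dKos (extMul f) = symMul f - extMul fun y => dKos (f y) := by
  simp only [dKos_apply, ι_extMul, symMul_sub, symMul_extMul]

theorem dKos_symMul (f : M → WeilFamily R M) :
    dKos (symMul f) = symMul fun y => dKos (f y) := by
  simp only [dKos_apply, ι_symMul]
  exact symMul_symMul fun y z => ι y (f z)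

theorem κ_dKos (x : M) (c : WeilFamily R M) : κ x (dKos c) = ι x c + dKos (κ x c) :=
  κ_symMul x fun y => ι y c

end Contractions

section Forms

variable {R : Type*} [CommRing R] {M : Type*} [AddCommGroup M] [Module R M] {n : ℕ}

variable (R M n) in
/-- The alternating `n`-forms on `M`, as a space of functions. -/
def altForms : Submodule R ((Fin n → M) → R) where
  carrier := {P | ∃ a : M [⋀^Fin n]→ₗ[R] R, ⇑a = P}
  add_mem' := by rintro _ _ ⟨a, rfl⟩ ⟨b, rfl⟩; exact ⟨a + b, rfl⟩
  zero_mem' := ⟨0, rfl⟩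
  smul_mem' := by rintro s _ ⟨a, rfl⟩; exact ⟨s • a, rfl⟩

variable (R M n) in
/-- The symmetric multilinear `n`-forms on `M`, as a space of functions. -/
def symForms : Submodule R ((Fin n → M) → R) where
  carrier := {P | ∃ s : MultilinearMap R (fun _ : Fin n => M) R,
    ⇑s = P ∧ ∀ (ρ : Equiv.Perm (Fin n)) (w : Fin n → M), P (w ∘ ρ) = P w}
  add_mem' := by
    rintro _ _ ⟨a, rfl, ha⟩ ⟨b, rfl, hb⟩
    exact ⟨a + b, rfl, fun ρ w => congrArg₂ (· + ·) (ha ρ w) (hb ρ w)⟩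
  zero_mem' := ⟨0, rfl, fun _ _ => rfl⟩
  smul_mem' := by
    rintro s _ ⟨a, rfl, ha⟩
    exact ⟨s • a, rfl, fun ρ w => congrArg (s • ·) (ha ρ w)⟩

theorem cons_comp_mem_altForms {P : (Fin (n + 1) → M) → R} (hP : P ∈ altForms R M (n + 1)) (x : M) :
    (fun v => P (Fin.cons x v)) ∈ altForms R M n := by
  obtain ⟨a, rfl⟩ := hP
  exact ⟨a.curryLeft x, rfl⟩

theorem cons_comp_mem_symForms {P : (Fin (n + 1) → M) → R} (hP : P ∈ symForms R M (n + 1)) (x : M) :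
    (fun w => P (Fin.cons x w)) ∈ symForms R M n := by
  obtain ⟨s, rfl, hs⟩ := hP
  refine ⟨s.curryLeft x, rfl, fun ρ w => ?_⟩
  refine (congrArg s ?_).trans (hs (Equiv.Perm.decomposeFin.symm (0, ρ)) (Fin.cons x w))
  ext m
  cases m using Fin.cases <;> simp

theorem exists_multilinear_of_cons {P : (Fin (n + 1) → M) → R}
    (hcons : ∀ x, ∃ s : MultilinearMap R (fun _ : Fin n => M) R, ⇑s = fun v => P (Fin.cons x v))
    (hlin : ∀ v, IsLinearMap R fun x => P (Fin.cons x v)) :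
    ∃ s : MultilinearMap R (fun _ : Fin (n + 1) => M) R, ⇑s = P := by
  choose s hs using hcons
  have hs' : ∀ x v, s x v = P (Fin.cons x v) := fun x v => congrFun (hs x) v
  refine ⟨LinearMap.uncurryLeft
    { toFun := s
      map_add' := fun x y => MultilinearMap.ext fun v => by
        simpa [hs'] using (hlin v).map_add x y
      map_smul' := fun r x => MultilinearMap.ext fun v => by
        simpa [hs'] using (hlin v).map_smul r x }, ?_⟩
  ext v
  exact (hs' _ _).trans (congrArg P (Fin.cons_self_tail v))

theorem mem_altForms_of_cons {P : (Fin (n + 1) → M) → R}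
    (hcons : ∀ x, (fun v => P (Fin.cons x v)) ∈ altForms R M n)
    (hlin : ∀ v, IsLinearMap R fun x => P (Fin.cons x v))
    (h01 : ∀ v, (0 : Fin (n + 1)) ≠ 1 → v 0 = v 1 → P v = 0) : P ∈ altForms R M (n + 1) := by
  obtain ⟨s, rfl⟩ := exists_multilinear_of_cons
    (fun x => let ⟨a, ha⟩ := hcons x; ⟨a.toMultilinearMap, ha⟩) hlin
  have h0 : ∀ (v : Fin (n + 1) → M) (b : Fin n), v 0 = v b.succ → s v = 0 := by
    intro v b hb
    obtain ⟨n, rfl⟩ : ∃ m, n = m + 1 := Nat.exists_eq_succ_of_ne_zero b.pos.ne'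
    obtain rfl | hb0 := eq_or_ne b 0
    · exact h01 v (by simp) hb
    obtain ⟨a, ha⟩ := hcons (v 0)
    have hswap : s (Fin.cons (v 0) (Fin.tail v ∘ Equiv.swap 0 b)) = - s v := by
      rw [← congrFun ha, a.map_swap _ hb0.symm, congrFun ha, Fin.cons_self_tail]
    rw [← neg_eq_zero, ← hswap]
    exact h01 _ (by simp) (by simpa [Fin.tail] using hb)
  refine ⟨{ s with map_eq_zero_of_eq' := fun v a b hab hne => ?_ }, rfl⟩
  cases a using Fin.cases with
  | zero =>
    obtain ⟨b, rfl⟩ := Fin.exists_succ_eq.2 hne.symm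
    exact h0 v b hab
  | succ a =>
    cases b using Fin.cases with
    | zero => exact h0 v a hab.symm
    | succ b =>
      obtain ⟨f, hf⟩ := hcons (v 0)
      have := f.map_eq_zero_of_eq (Fin.tail v) hab (by simpa using hne)
      rwa [congrFun hf, Fin.cons_self_tail] at this

theorem mem_symForms_of_cons {P : (Fin (n + 1) → M) → R}
    (hcons : ∀ x, (fun v => P (Fin.cons x v)) ∈ symForms R M n)
    (hlin : ∀ v, IsLinearMap R fun x => P (Fin.cons x v))
    (h01 : ∀ v, P (v ∘ Equiv.swap 0 1) = P v) : P ∈ symForms R M (n + 1) := by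
  obtain ⟨s, rfl⟩ := exists_multilinear_of_cons (fun x => (hcons x).imp fun _ h => h.1) hlin
  let stab : Submonoid (Equiv.Perm (Fin (n + 1))) :=
    { carrier := {ρ | ∀ w, s (w ∘ ρ) = s w}
      mul_mem' := fun {ρ τ} hρ hτ w => (hτ (w ∘ ρ)).trans (hρ w)
      one_mem' := fun _ => rfl }
  suffices h : stab = ⊤ from ⟨s, rfl, fun ρ => h.ge (Submonoid.mem_top ρ)⟩
  rw [eq_top_iff, ← Equiv.Perm.mclosure_swap_castSucc_succ, Submonoid.closure_le]
  rintro _ ⟨t, rfl⟩ w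
  obtain ⟨n, rfl⟩ : ∃ m, n = m + 1 := Nat.exists_eq_succ_of_ne_zero t.pos.ne'
  cases t using Fin.cases with
  | zero => exact h01 w
  | succ t =>
    obtain ⟨_, -, hf⟩ := hcons (w 0)
    have hw : w ∘ Equiv.swap t.succ.castSucc t.succ.succ =
        Fin.cons (w 0) (Fin.tail w ∘ Equiv.swap t.castSucc t.succ) := by
      ext m
      cases m using Fin.cases with
      | zero => simp [Equiv.swap_apply_of_ne_of_ne, Fin.ext_iff]
      | succ m =>
        simp only [Function.comp_apply, Fin.cons_succ, Fin.tail, Equiv.swap_apply_def, Fin.ext_iff]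
        split_ifs <;> simp_all
    exact (congrArg s hw).trans <| (hf _ _).trans <| congrArg s <| Fin.cons_self_tail w

end Forms

section Tuples

variable {M : Type*} {n : ℕ}

theorem cons_cons_comp_swap (x y : M) (w : Fin n → M) :
    (Fin.cons x (Fin.cons y w) : Fin (n + 2) → M) ∘ Equiv.swap 0 1 = Fin.cons y (Fin.cons x w) := by
  ext m
  cases m using Fin.cases with
  | zero => simp
  | succ m =>
    cases m using Fin.cases with
    | zero => simp
    | succ m => simp [Equiv.swap_apply_of_ne_of_ne, Fin.ext_iff]

theorem cons_cons_tail_tail (v : Fin (n + 2) → M) :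
    Fin.cons (v 0) (Fin.cons (v 1) (Fin.tail (Fin.tail v))) = v := by
  conv_rhs => rw [← Fin.cons_self_tail v, ← Fin.cons_self_tail (Fin.tail v)]
  rfl

end Tuples

section Cochains

variable {R : Type*} [CommRing R] {M : Type*} [AddCommGroup M] [Module R M] {c : WeilFamily R M}

variable (R M) in
/-- The Weil cochains: families that are alternating in the exterior variables and symmetric
multilinear in the symmetric ones, that is, elements of the (completed) absolute Weil algebra. -/
def cochains : Submodule R (WeilFamily R M) where
  carrier := {c | (∀ i j w, (fun v => c i j v w) ∈ altForms R M i) ∧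
    ∀ i j v, c i j v ∈ symForms R M j}
  add_mem' ha hb := ⟨fun i j w => add_mem (ha.1 i j w) (hb.1 i j w),
    fun i j v => add_mem (ha.2 i j v) (hb.2 i j v)⟩
  zero_mem' := ⟨fun _ _ _ => zero_mem _, fun _ _ _ => zero_mem _⟩
  smul_mem' s _ ha := ⟨fun i j w => Submodule.smul_mem _ s (ha.1 i j w),
    fun i j v => Submodule.smul_mem _ s (ha.2 i j v)⟩

theorem ι_mem_cochains (hc : c ∈ cochains R M) (x : M) : ι x c ∈ cochains R M :=
  ⟨fun i j w => cons_comp_mem_altForms (hc.1 (i + 1) j w) x, fun i j _ => hc.2 (i + 1) j _⟩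

theorem κ_mem_cochains (hc : c ∈ cochains R M) (x : M) : κ x c ∈ cochains R M :=
  ⟨fun i j _ => hc.1 i (j + 1) _, fun i j v => cons_comp_mem_symForms (hc.2 i (j + 1) v) x⟩

/-- The relations between the contractions of a Weil cochain. -/
structure ContractionRelations (c : WeilFamily R M) : Prop where
  isLinearMap_ι : IsLinearMap R fun x => ι x c
  isLinearMap_κ : IsLinearMap R fun x => κ x c
  ι_self : ∀ x, ι x (ι x c) = 0
  κ_comm : ∀ x y, κ x (κ y c) = κ y (κ x c)

theorem contractionRelations (hc : c ∈ cochains R M) : ContractionRelations c where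
  isLinearMap_ι := by
    constructor <;> intros <;> ext i j v w <;> obtain ⟨a, ha⟩ := hc.1 (i + 1) j w
    · simpa [ι_apply, congrFun ha] using a.toMultilinearMap.cons_add v _ _
    · simpa [ι_apply, congrFun ha] using a.toMultilinearMap.cons_smul v _ _
  isLinearMap_κ := by
    constructor <;> intros <;> ext i j v w <;> obtain ⟨s, hs, -⟩ := hc.2 i (j + 1) v
    · simpa [κ_apply, hs] using s.cons_add w _ _
    · simpa [κ_apply, hs] using s.cons_smul w _ _
  ι_self x := by
    ext i j v w
    obtain ⟨a, ha⟩ := hc.1 (i + 2) j w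
    exact (congrFun ha _).symm.trans (a.map_eq_zero_of_eq _ (i := 0) (j := 1) rfl Fin.zero_ne_one)
  κ_comm x y := by
    ext i j v w
    obtain ⟨-, -, hs⟩ := hc.2 i (j + 2) v
    exact (congrArg _ (cons_cons_comp_swap x y w)).symm.trans
      (hs (Equiv.swap 0 1) (Fin.cons x (Fin.cons y w)))

theorem ι_add (hc : c ∈ cochains R M) (x y : M) : ι (x + y) c = ι x c + ι y c :=
  (contractionRelations hc).isLinearMap_ι.map_add x y

theorem κ_sub (hc : c ∈ cochains R M) (x y : M) : κ (x - y) c = κ x c - κ y c :=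
  (contractionRelations hc).isLinearMap_κ.map_sub x y

theorem ι_ι_self (hc : c ∈ cochains R M) (x : M) : ι x (ι x c) = 0 :=
  (contractionRelations hc).ι_self x

theorem ι_ι_comm (hc : c ∈ cochains R M) (x y : M) : ι x (ι y c) = -ι y (ι x c) := by
  have := ι_ι_self hc (x + y)
  rw [ι_add (ι_mem_cochains hc _), ι_add hc, map_add, map_add, ι_ι_self hc, ι_ι_self hc,
    zero_add, add_zero] at this
  exact eq_neg_of_add_eq_zero_left this

theorem κ_κ_comm (hc : c ∈ cochains R M) (x y : M) : κ x (κ y c) = κ y (κ x c) :=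
  (contractionRelations hc).κ_comm x y

theorem mem_cochains_of_contractionRelations {S : Submodule R (WeilFamily R M)}
    (hι : ∀ c ∈ S, ∀ x, ι x c ∈ S) (hκ : ∀ c ∈ S, ∀ x, κ x c ∈ S)
    (hrel : ∀ c ∈ S, ContractionRelations c) (hc : c ∈ S) : c ∈ cochains R M := by
  constructor
  · intro i j w
    induction i generalizing c with
    | zero => exact ⟨AlternatingMap.constOfIsEmpty R M (Fin 0) (c 0 j Fin.elim0 w),
        funext fun v => congrArg (c 0 j · w) (Subsingleton.elim _ v)⟩
    | succ i ih =>
      refine mem_altForms_of_cons (fun x => ih (hι c hc x))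
        (fun v => ⟨fun x y => ?_, fun r x => ?_⟩) fun v h01 hv => ?_
      · exact congrArg (· i j v w) ((hrel c hc).isLinearMap_ι.map_add x y)
      · exact congrArg (· i j v w) ((hrel c hc).isLinearMap_ι.map_smul r x)
      · obtain ⟨i, rfl⟩ : ∃ m, i = m + 1 :=
          Nat.exists_eq_succ_of_ne_zero fun h => h01 (by subst h; rfl)
        rw [← cons_cons_tail_tail v, ← hv]
        exact congrArg (· i j (Fin.tail (Fin.tail v)) w) ((hrel c hc).ι_self (v 0))
  · intro i j v
    induction j generalizing c with
    | zero =>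
      exact ⟨MultilinearMap.constOfIsEmpty R _ (c i 0 v Fin.elim0),
        funext fun w => congrArg (c i 0 v) (Subsingleton.elim _ w),
        fun ρ w => congrArg (c i 0 v) (Subsingleton.elim _ w)⟩
    | succ j ih =>
      refine mem_symForms_of_cons (fun x => ih (hκ c hc x))
        (fun w => ⟨fun x y => ?_, fun r x => ?_⟩) fun w => ?_
      · exact congrArg (· i j v w) ((hrel c hc).isLinearMap_κ.map_add x y)
      · exact congrArg (· i j v w) ((hrel c hc).isLinearMap_κ.map_smul r x)
      · cases j with
        | zero =>
          exact congrArg (c i 1 v) (funext fun m => congrArg w (Subsingleton.elim (α := Fin 1) _ m))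
        | succ j =>
          rw [← cons_cons_tail_tail w, cons_cons_comp_swap]
          exact congrArg (· i j v (Fin.tail (Fin.tail w))) ((hrel c hc).κ_comm (w 0) (w 1))

theorem ContractionRelations.add {c c' : WeilFamily R M} (hc : ContractionRelations c)
    (hc' : ContractionRelations c') : ContractionRelations (c + c') where
  isLinearMap_ι := by
    simp only [map_add]
    exact (hc.isLinearMap_ι.mk' + hc'.isLinearMap_ι.mk').isLinear
  isLinearMap_κ := by
    simp only [map_add]
    exact (hc.isLinearMap_κ.mk' + hc'.isLinearMap_κ.mk').isLinear
  ι_self x := by simp only [map_add, hc.ι_self, hc'.ι_self, add_zero]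
  κ_comm x y := by simp only [map_add, hc.κ_comm x y, hc'.κ_comm x y]

theorem ContractionRelations.smul (s : R) {c : WeilFamily R M} (hc : ContractionRelations c) :
    ContractionRelations (s • c) where
  isLinearMap_ι := by
    simp only [map_smul]
    exact (s • hc.isLinearMap_ι.mk').isLinear
  isLinearMap_κ := by
    simp only [map_smul]
    exact (s • hc.isLinearMap_κ.mk').isLinear
  ι_self x := by simp only [map_smul, hc.ι_self, smul_zero]
  κ_comm x y := by simp only [map_smul, hc.κ_comm x y]

theorem mem_cochains_of_generators {G : Set (WeilFamily R M)}
    (hι : ∀ c ∈ G, ∀ x, ι x c ∈ cochains R M ⊔ Submodule.span R G)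
    (hκ : ∀ c ∈ G, ∀ x, κ x c ∈ cochains R M ⊔ Submodule.span R G)
    (hrel : ∀ c ∈ G, ContractionRelations c) (hc : c ∈ G) : c ∈ cochains R M := by
  let related : Submodule R (WeilFamily R M) :=
    { carrier := {c | ContractionRelations c}
      add_mem' := ContractionRelations.add
      zero_mem' := contractionRelations (zero_mem _)
      smul_mem' := ContractionRelations.smul }
  have hstable (T : WeilFamily R M →ₗ[R] WeilFamily R M)
      (hT : ∀ c ∈ cochains R M, T c ∈ cochains R M)
      (hG : ∀ c ∈ G, T c ∈ cochains R M ⊔ Submodule.span R G) :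
      cochains R M ⊔ Submodule.span R G ≤ (cochains R M ⊔ Submodule.span R G).comap T :=
    sup_le (fun c hc => Submodule.mem_sup_left (hT c hc)) (Submodule.span_le.2 hG)
  have hrelated : cochains R M ⊔ Submodule.span R G ≤ related :=
    sup_le (fun _ => contractionRelations) (Submodule.span_le.2 hrel)
  exact mem_cochains_of_contractionRelations
    (fun c hc x => hstable (ι x) (fun _ h => ι_mem_cochains h x) (fun c hc => hι c hc x) hc)
    (fun c hc x => hstable (κ x) (fun _ h => κ_mem_cochains h x) (fun c hc => hκ c hc x) hc)
    hrelated (Submodule.mem_sup_right (Submodule.subset_span hc))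

variable (R M) in
/-- The linear maps from `M` to the Weil cochains, as a space of functions. -/
def cochainMaps : Submodule R (M → WeilFamily R M) where
  carrier := {f | IsLinearMap R f ∧ ∀ y, f y ∈ cochains R M}
  add_mem' ha hb := ⟨(ha.1.mk' + hb.1.mk').isLinear, fun y => add_mem (ha.2 y) (hb.2 y)⟩
  zero_mem' := ⟨(0 : M →ₗ[R] WeilFamily R M).isLinear, fun _ => zero_mem _⟩
  smul_mem' s _ ha := ⟨(s • ha.1.mk').isLinear, fun y => Submodule.smul_mem _ s (ha.2 y)⟩

theorem ι_mem_cochainMaps (hc : c ∈ cochains R M) : (fun y => ι y c) ∈ cochainMaps R M :=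
  ⟨(contractionRelations hc).isLinearMap_ι, ι_mem_cochains hc⟩

theorem κ_mem_cochainMaps (hc : c ∈ cochains R M) : (fun y => κ y c) ∈ cochainMaps R M :=
  ⟨(contractionRelations hc).isLinearMap_κ, κ_mem_cochains hc⟩

section Maps

variable {f : M → WeilFamily R M}

theorem comp_mem_cochainMaps (hf : f ∈ cochainMaps R M) (u : M →ₗ[R] M) :
    (fun y => f (u y)) ∈ cochainMaps R M :=
  ⟨(hf.1.mk' ∘ₗ u).isLinear, fun y => hf.2 (u y)⟩

theorem map_comp_mem_cochainMaps (hf : f ∈ cochainMaps R M)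
    {T : WeilFamily R M →ₗ[R] WeilFamily R M} (hT : ∀ c ∈ cochains R M, T c ∈ cochains R M) :
    (fun y => T (f y)) ∈ cochainMaps R M :=
  ⟨(T ∘ₗ hf.1.mk').isLinear, fun y => hT _ (hf.2 y)⟩

theorem isLinearMap_apply_comp {φ : M → WeilFamily R M →ₗ[R] WeilFamily R M}
    (hφ : ∀ c ∈ cochains R M, IsLinearMap R fun x => φ x c) (hf : f ∈ cochainMaps R M) :
    IsLinearMap R fun x y => φ x (f y) :=
  ⟨fun x x' => funext fun y => (hφ _ (hf.2 y)).map_add x x',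
    fun s x => funext fun y => (hφ _ (hf.2 y)).map_smul s x⟩

theorem extMul_mem_cochains (hf : f ∈ cochainMaps R M) : extMul f ∈ cochains R M := by
  refine mem_cochains_of_generators (G := extMul '' cochainMaps R M) ?_ ?_ ?_ ⟨f, hf, rfl⟩
  · rintro _ ⟨f, hf, rfl⟩ x
    rw [ι_extMul]
    refine Submodule.sub_mem _ (Submodule.mem_sup_left (hf.2 x))
      (Submodule.mem_sup_right (Submodule.subset_span ⟨_, ?_, rfl⟩))
    exact map_comp_mem_cochainMaps hf fun _ h => ι_mem_cochains h x
  · rintro _ ⟨f, hf, rfl⟩ x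
    rw [κ_extMul]
    refine Submodule.mem_sup_right (Submodule.subset_span ⟨_, ?_, rfl⟩)
    exact map_comp_mem_cochainMaps hf fun _ h => κ_mem_cochains h x
  · rintro _ ⟨f, hf, rfl⟩
    refine ⟨?_, ?_, fun x => ?_, fun x y => ?_⟩
    · simp only [ι_extMul]
      exact (hf.1.mk' - extMul ∘ₗ (isLinearMap_apply_comp
        (fun c hc => (contractionRelations hc).isLinearMap_ι) hf).mk').isLinear
    · simp only [κ_extMul]
      exact (extMul ∘ₗ (isLinearMap_apply_comp
        (fun c hc => (contractionRelations hc).isLinearMap_κ) hf).mk').isLinear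
    · simp only [ι_extMul, map_sub, ι_ι_self (hf.2 _), sub_sub_cancel]
      exact map_zero extMul
    · simp only [κ_extMul, κ_κ_comm (hf.2 _) x y]

theorem symMul_mem_cochains (hf : f ∈ cochainMaps R M) : symMul f ∈ cochains R M := by
  refine mem_cochains_of_generators (G := symMul '' cochainMaps R M) ?_ ?_ ?_ ⟨f, hf, rfl⟩
  · rintro _ ⟨f, hf, rfl⟩ x
    rw [ι_symMul]
    refine Submodule.mem_sup_right (Submodule.subset_span ⟨_, ?_, rfl⟩)
    exact map_comp_mem_cochainMaps hf fun _ h => ι_mem_cochains h x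
  · rintro _ ⟨f, hf, rfl⟩ x
    rw [κ_symMul]
    refine Submodule.add_mem _ (Submodule.mem_sup_left (hf.2 x))
      (Submodule.mem_sup_right (Submodule.subset_span ⟨_, ?_, rfl⟩))
    exact map_comp_mem_cochainMaps hf fun _ h => κ_mem_cochains h x
  · rintro _ ⟨f, hf, rfl⟩
    refine ⟨?_, ?_, fun x => ?_, fun x y => ?_⟩
    · simp only [ι_symMul]
      exact (symMul ∘ₗ (isLinearMap_apply_comp
        (fun c hc => (contractionRelations hc).isLinearMap_ι) hf).mk').isLinear
    · simp only [κ_symMul]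
      exact (hf.1.mk' + symMul ∘ₗ (isLinearMap_apply_comp
        (fun c hc => (contractionRelations hc).isLinearMap_κ) hf).mk').isLinear
    · simp only [ι_symMul, ι_ι_self (hf.2 _)]
      exact map_zero symMul
    · simp only [κ_symMul, map_add, κ_κ_comm (hf.2 _) x y]
      abel

end Maps

theorem dKos_mem_cochains (hc : c ∈ cochains R M) : dKos c ∈ cochains R M :=
  symMul_mem_cochains (ι_mem_cochainMaps hc)

theorem ι_dKos (hc : c ∈ cochains R M) (x : M) : ι x (dKos c) = -dKos (ι x c) := by
  simp only [dKos_apply, ι_symMul, ι_ι_comm hc x, symMul_neg]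

theorem dKos_dKos (hc : c ∈ cochains R M) : dKos (dKos c) = 0 := by
  refine eq_of_ι_κ (p := (· ∈ cochains R M)) (T := fun c => dKos (dKos c)) (T' := 0)
    (fun c _ => rfl) (fun c hc x => ⟨ι x c, ι_mem_cochains hc x, ?_⟩)
    (fun c hc x => ⟨κ x c, κ_mem_cochains hc x, ?_⟩) hc
  · simp [ι_dKos (dKos_mem_cochains hc), ι_dKos hc]
  · simp [κ_dKos, ι_dKos hc]

end Cochains

section BracketSum

variable {M : Type*}

theorem pairTupleW_cons_zero {n : ℕ} (x b : M) (v : Fin (n + 1) → M) (l : Fin (n + 1)) :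
    pairTupleW (n + 1) (Fin.cons x v) b 0 l.succ = Fin.cons b (l.removeNth v) := by
  ext m
  cases m using Fin.cases with
  | zero => rfl
  | succ m =>
    simp only [pairTupleW, Fin.val_succ, Fin.cons_succ, Fin.removeNth, Fin.succAbove, Fin.lt_def,
      Fin.val_castSucc]
    by_cases hml : m.1 < l.1
    · simp [hml, Fin.cons, Fin.castSucc]
      rfl
    · simp [hml]
      rfl

theorem exists_pairTupleW_eq_cons {n : ℕ} (x b : M) (v : Fin (n + 2) → M) (i l : Fin (n + 2)) :
    ∃ u : Fin n → M, pairTupleW (n + 1) v b i l = Fin.cons b u ∧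
      pairTupleW (n + 2) (Fin.cons x v) b i.succ l.succ = Fin.cons b (Fin.cons x u) := by
  refine ⟨Fin.tail (pairTupleW (n + 1) v b i l), (Fin.cons_self_tail _).symm, ?_⟩
  ext m
  cases m using Fin.cases with
  | zero => rfl
  | succ m =>
    cases m using Fin.cases with
    | zero => rfl
    | succ m =>
      simp only [pairTupleW, Fin.val_succ, Fin.cons_succ, Fin.tail]
      split_ifs <;> first | omega | rfl

variable {F : Type*} [Field F] {g : Type*} [LieRing g] [LieAlgebra F g]

theorem map_pairTupleW_cons {n : ℕ} (a : g [⋀^Fin (n + 1)]→ₗ[F] F) (x b : g)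
    (v : Fin (n + 1) → g) {i l : Fin (n + 1)} (hil : i < l) :
    a (pairTupleW (n + 1) (Fin.cons x v) b i.succ l.succ) =
      -a (Fin.cons x (pairTupleW n v b i l)) := by
  obtain ⟨n, rfl⟩ : ∃ m, n = m + 1 := Nat.exists_eq_succ_of_ne_zero (by omega)
  obtain ⟨u, hu, hu'⟩ := exists_pairTupleW_eq_cons x b v i l
  rw [hu, hu', ← cons_cons_comp_swap, a.map_swap _ Fin.zero_ne_one]

/-- Cartan's formula for the differential with trivial coefficients. -/
theorem dTrivW_cons {n : ℕ} (a : g [⋀^Fin (n + 1)]→ₗ[F] F) (x : g) (v : Fin (n + 1) → g) :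
    dTrivW F g (n + 1) a (Fin.cons x v) =
      -∑ t, a (Function.update v t ⁅x, v t⁆) - dTrivW F g n (a.curryLeft x) v := by
  have hzero (l : Fin (n + 1)) :
      (-1 : F) ^ (l.1 + 1) * a (pairTupleW (n + 1) (Fin.cons x v) ⁅x, v l⁆ 0 l.succ) =
        -a (Function.update v l ⁅x, v l⁆) := by
    rw [pairTupleW_cons_zero, ← Fin.insertNth_removeNth, a.map_insertNth, pow_succ]
    simp [Matrix.vecCons]
  have hsucc (i l : Fin (n + 1)) :
      (if i.succ < l.succ then (-1 : F) ^ (i.1 + 1 + (l.1 + 1)) *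
          a (pairTupleW (n + 1) (Fin.cons x v) ⁅v i, v l⁆ i.succ l.succ) else 0) =
        -if i < l then (-1) ^ (i.1 + l.1) * a.curryLeft x (pairTupleW n v ⁅v i, v l⁆ i l)
          else 0 := by
    split_ifs with hil' hil hil
    · rw [map_pairTupleW_cons a x _ v hil]
      simp only [AlternatingMap.curryLeft_apply_apply, Matrix.vecCons]
      ring
    · exact absurd (Fin.succ_lt_succ_iff.1 hil') hil
    · exact absurd (Fin.succ_lt_succ_iff.2 hil) hil'
    · exact neg_zero.symm
  simp only [dTrivW]
  rw [Fin.sum_univ_succ]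
  simp only [Fin.sum_univ_succ (n := n + 1), Fin.cons_zero, Fin.cons_succ, hsucc, Fin.succ_pos,
    Fin.not_lt_zero, if_true, if_false, lt_irrefl, zero_add, Fin.val_zero, Fin.val_succ, hzero,
    Finset.sum_neg_distrib, sub_eq_add_neg]

end BracketSum

section Operators

variable {F : Type*} [Field F] {g : Type*} [LieRing g]

/-- The coadjoint action in the exterior variables. -/
def lieExt (x : g) : WeilFamily F g →ₗ[F] WeilFamily F g where
  toFun c i j v w := -∑ t, c i j (Function.update v t ⁅x, v t⁆) w
  map_add' c c' := by
    ext i j v w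
    simp only [Pi.add_apply, Finset.sum_add_distrib, neg_add]
  map_smul' s c := by
    ext i j v w
    simp only [Pi.smul_apply, ← Finset.smul_sum, smul_neg, RingHom.id_apply]

/-- The coadjoint action in the symmetric variables. -/
def lieSym (x : g) : WeilFamily F g →ₗ[F] WeilFamily F g where
  toFun c i j v w := -∑ r, c i j v (Function.update w r ⁅x, w r⁆)
  map_add' c c' := by
    ext i j v w
    simp only [Pi.add_apply, Finset.sum_add_distrib, neg_add]
  map_smul' s c := by
    ext i j v w
    simp only [Pi.smul_apply, ← Finset.smul_sum, smul_neg, RingHom.id_apply]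

/-- The Lie derivative on the Weil algebra. -/
def lieDer (x : g) : WeilFamily F g →ₗ[F] WeilFamily F g := lieExt x + lieSym x

/-- The Chevalley–Eilenberg differential with trivial coefficients, acting in the exterior
variables only. -/
def dExt : WeilFamily F g →ₗ[F] WeilFamily F g where
  toFun c i j := match i with
    | 0 => 0
    | i + 1 => fun v w => dTrivW F g i (fun v => c i j v w) v
  map_add' c c' := by
    ext i j v w
    cases i <;> simp [dTrivW, mul_add, ← Finset.sum_add_distrib, ite_add_ite]
  map_smul' s c := by
    ext i j v w
    cases i <;> simp [dTrivW, Finset.mul_sum, mul_left_comm]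

/-- The Chevalley–Eilenberg differential with coefficients in the symmetric powers. -/
def dLie : WeilFamily F g →ₗ[F] WeilFamily F g where
  toFun c := extMul (fun y => lieSym y c) + dExt c
  map_add' c c' := by
    simp only [map_add]
    rw [extMul_add, add_add_add_comm]
  map_smul' s c := by
    simp only [map_smul, RingHom.id_apply, smul_add]
    rw [extMul_smul]

/-- The Weil differential. -/
def weilD : WeilFamily F g →ₗ[F] WeilFamily F g := dLie + dKos

theorem dLie_apply (c : WeilFamily F g) : dLie c = extMul (fun y => lieSym y c) + dExt c := rfl

theorem weilD_apply (c : WeilFamily F g) : weilD c = dLie c + dKos c := rfl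

theorem dLie_zero_left (c : WeilFamily F g) (j : ℕ) : dLie c 0 j = 0 := add_zero 0

theorem dWeil_eq (c : WeilFamily F g) : dWeil F g c = weilD c := by
  have hLie (i j : ℕ) (v : Fin (i + 1) → g) (w : Fin j → g) :
      dLieS F g i j (c i j) v w = dLie c (i + 1) j v w := by
    simp only [dLieS, pow_succ, mul_neg_one, neg_mul, ← mul_neg]
    rfl
  ext i j v w
  change _ = dLie c i j v w + dKos c i j v w
  rcases i with _ | i <;> rcases j with _ | j <;> simp [dWeil, hLie, dLie_zero_left] <;> rfl

theorem ι_lieExt (x y : g) (c : WeilFamily F g) :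
    ι y (lieExt x c) = lieExt x (ι y c) - ι ⁅x, y⁆ c := by
  ext i j v w
  change -∑ t : Fin (i + 1), _ = -∑ t, c (i + 1) j (Fin.cons y (Function.update v t _)) w - _
  simp [Fin.sum_univ_succ, Fin.update_cons_zero, Fin.cons_update, ι_apply, sub_eq_add_neg, add_comm]

theorem κ_lieExt (x y : g) (c : WeilFamily F g) : κ y (lieExt x c) = lieExt x (κ y c) := rfl

theorem ι_lieSym (x y : g) (c : WeilFamily F g) : ι y (lieSym x c) = lieSym x (ι y c) := rfl

theorem κ_lieSym (x y : g) (c : WeilFamily F g) :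
    κ y (lieSym x c) = lieSym x (κ y c) - κ ⁅x, y⁆ c := by
  ext i j v w
  change -∑ t : Fin (j + 1), _ = -∑ t, c i (j + 1) v (Fin.cons y (Function.update w t _)) - _
  simp [Fin.sum_univ_succ, Fin.update_cons_zero, Fin.cons_update, κ_apply, sub_eq_add_neg, add_comm]

theorem ι_lieDer (x y : g) (c : WeilFamily F g) :
    ι y (lieDer x c) = lieDer x (ι y c) - ι ⁅x, y⁆ c := by
  simp only [lieDer, LinearMap.add_apply, map_add, ι_lieExt, ι_lieSym]
  abel

theorem κ_lieDer (x y : g) (c : WeilFamily F g) :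
    κ y (lieDer x c) = lieDer x (κ y c) - κ ⁅x, y⁆ c := by
  simp only [lieDer, LinearMap.add_apply, map_add, κ_lieExt, κ_lieSym]
  abel

theorem lieExt_zero_left (x : g) (c : WeilFamily F g) (j : ℕ) : lieExt x c 0 j = 0 :=
  funext₂ fun _ _ => neg_zero

theorem lieSym_zero_right (x : g) (c : WeilFamily F g) (i : ℕ) : lieSym x c i 0 = 0 :=
  funext₂ fun _ _ => neg_zero

theorem κ_dExt (x : g) (c : WeilFamily F g) : κ x (dExt c) = dExt (κ x c) := by
  ext i
  cases i <;> rfl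

theorem lieDer_zero_zero (x : g) (c : WeilFamily F g) : lieDer x c 0 0 = 0 :=
  (congrArg₂ (· + ·) (lieExt_zero_left x c 0) (lieSym_zero_right x c 0)).trans (zero_add 0)

theorem lieDer_apply_eq_zero (x : g) {c : WeilFamily F g} {i j : ℕ} (hc : c i j = 0) :
    lieDer x c i j = 0 := by
  ext v w
  simp [lieDer, lieExt, lieSym, hc]

end Operators

section Cartan

variable {F : Type*} [Field F] {g : Type*} [LieRing g] [LieAlgebra F g] {c : WeilFamily F g}

theorem lieExt_eq (hc : c ∈ cochains F g) (x : g) :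
    lieExt x c = -extMul fun y => ι ⁅x, y⁆ c := by
  refine eq_of_ι (p := (· ∈ cochains F g)) (T := lieExt x)
    (T' := fun c => -extMul fun y => ι ⁅x, y⁆ c)
    (fun c _ j => (lieExt_zero_left x c j).trans neg_zero.symm)
    (fun c hc z => ⟨ι z c, ι_mem_cochains hc z, ?_⟩) hc
  have hswap : (extMul fun y => ι z (ι ⁅x, y⁆ c)) = -extMul fun y => ι ⁅x, y⁆ (ι z c) := by
    rw [← map_neg]
    exact congrArg extMul (funext fun y => ι_ι_comm hc _ _)
  rw [ι_lieExt, map_neg, ι_extMul, hswap]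
  abel

theorem lieSym_eq (hc : c ∈ cochains F g) (x : g) :
    lieSym x c = -symMul fun y => κ ⁅x, y⁆ c := by
  refine eq_of_ι_κ (p := (· ∈ cochains F g)) (T := lieSym x)
    (T' := fun c => -symMul fun y => κ ⁅x, y⁆ c)
    (fun c _ => (lieSym_zero_right x c 0).trans neg_zero.symm)
    (fun c hc z => ⟨ι z c, ι_mem_cochains hc z, ?_⟩)
    (fun c hc z => ⟨κ z c, κ_mem_cochains hc z, ?_⟩) hc
  · rw [ι_lieSym, map_neg, ι_symMul]
    rfl
  · simp only [κ_lieSym, map_neg, κ_symMul, κ_κ_comm hc z]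
    abel

theorem lieExt_mem_cochains (hc : c ∈ cochains F g) (x : g) : lieExt x c ∈ cochains F g := by
  rw [lieExt_eq hc]
  exact neg_mem (extMul_mem_cochains (comp_mem_cochainMaps (ι_mem_cochainMaps hc)
    (LieAlgebra.ad F g x)))

theorem lieSym_mem_cochains (hc : c ∈ cochains F g) (x : g) : lieSym x c ∈ cochains F g := by
  rw [lieSym_eq hc]
  exact neg_mem (symMul_mem_cochains (comp_mem_cochainMaps (κ_mem_cochainMaps hc)
    (LieAlgebra.ad F g x)))

theorem lieDer_mem_cochains (hc : c ∈ cochains F g) (x : g) : lieDer x c ∈ cochains F g :=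
  add_mem (lieExt_mem_cochains hc x) (lieSym_mem_cochains hc x)

theorem isLinearMap_lieExt (hc : c ∈ cochains F g) : IsLinearMap F fun x => lieExt x c := by
  simp only [lieExt_eq hc]
  constructor <;> intros
  · simp only [add_lie, ι_add hc, extMul_add, neg_add]
  · simp only [smul_lie, (contractionRelations hc).isLinearMap_ι.map_smul, extMul_smul, smul_neg]

theorem isLinearMap_lieSym (hc : c ∈ cochains F g) : IsLinearMap F fun x => lieSym x c := by
  simp only [lieSym_eq hc]
  constructor <;> intros
  · simp only [add_lie, (contractionRelations hc).isLinearMap_κ.map_add, symMul_add, neg_add]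
  · simp only [smul_lie, (contractionRelations hc).isLinearMap_κ.map_smul, symMul_smul, smul_neg]

theorem ι_dExt (hc : c ∈ cochains F g) (x : g) :
    ι x (dExt c) = lieExt x c - dExt (ι x c) := by
  ext i j v w
  obtain ⟨a, ha⟩ := hc.1 i j w
  cases i with
  | zero =>
    change dTrivW F g 0 (fun v => c 0 j v w) (Fin.cons x v) = -∑ t : Fin 0, _ - 0
    simp [dTrivW]
  | succ i =>
    change dTrivW F g (i + 1) (fun v => c (i + 1) j v w) (Fin.cons x v) =
      -∑ t, c (i + 1) j (Function.update v t ⁅x, v t⁆) w -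
        dTrivW F g i (fun v => c (i + 1) j (Fin.cons x v) w) v
    simp only [← congrFun ha]
    exact dTrivW_cons a x v

theorem dExt_mem_cochains (hc : c ∈ cochains F g) : dExt c ∈ cochains F g := by
  refine mem_cochains_of_generators (G := dExt '' cochains F g) ?_ ?_ ?_ ⟨c, hc, rfl⟩
  · rintro _ ⟨c, hc, rfl⟩ x
    rw [ι_dExt hc]
    exact Submodule.sub_mem _ (Submodule.mem_sup_left (lieExt_mem_cochains hc x))
      (Submodule.mem_sup_right (Submodule.subset_span ⟨_, ι_mem_cochains hc x, rfl⟩))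
  · rintro _ ⟨c, hc, rfl⟩ x
    rw [κ_dExt]
    exact Submodule.mem_sup_right (Submodule.subset_span ⟨_, κ_mem_cochains hc x, rfl⟩)
  · rintro _ ⟨c, hc, rfl⟩
    have hcon := contractionRelations hc
    refine ⟨?_, ?_, fun x => ?_, fun x y => ?_⟩
    · simp only [ι_dExt hc]
      exact ((isLinearMap_lieExt hc).mk' - dExt ∘ₗ hcon.isLinearMap_ι.mk').isLinear
    · simp only [κ_dExt]
      exact (dExt ∘ₗ hcon.isLinearMap_κ.mk').isLinear
    · rw [ι_dExt hc, map_sub, ι_lieExt, ι_dExt (ι_mem_cochains hc x), hcon.ι_self, lie_self,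
        hcon.isLinearMap_ι.map_zero, map_zero]
      abel
    · simp only [κ_dExt, hcon.κ_comm x y]

theorem dLie_mem_cochains (hc : c ∈ cochains F g) : dLie c ∈ cochains F g :=
  add_mem (extMul_mem_cochains ⟨isLinearMap_lieSym hc, lieSym_mem_cochains hc⟩)
    (dExt_mem_cochains hc)

theorem weilD_mem_cochains (hc : c ∈ cochains F g) : weilD c ∈ cochains F g :=
  add_mem (dLie_mem_cochains hc) (dKos_mem_cochains hc)

theorem ι_dLie (hc : c ∈ cochains F g) (x : g) :
    ι x (dLie c) = lieDer x c - dLie (ι x c) := by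
  simp only [dLie_apply, map_add, ι_extMul, ι_dExt hc, ι_lieSym, lieDer, LinearMap.add_apply]
  abel

theorem ι_weilD (hc : c ∈ cochains F g) (x : g) :
    ι x (weilD c) = lieDer x c - weilD (ι x c) := by
  simp only [weilD_apply, map_add, ι_dLie hc, ι_dKos hc]
  abel

theorem lieDer_lieDer (hc : c ∈ cochains F g) (x y : g) :
    lieDer x (lieDer y c) - lieDer y (lieDer x c) = lieDer ⁅x, y⁆ c := by
  have hcomm (z : g) (f : g → WeilFamily F g) (hf : IsLinearMap F f) :
      f ⁅⁅x, y⁆, z⁆ = f ⁅x, ⁅y, z⁆⁆ - f ⁅y, ⁅x, z⁆⁆ := by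
    rw [lie_lie, hf.map_sub]
  refine eq_of_ι_κ (p := (· ∈ cochains F g))
    (T := fun c => lieDer x (lieDer y c) - lieDer y (lieDer x c)) (T' := lieDer ⁅x, y⁆)
    (fun c _ => ?_) (fun c hc z => ⟨ι z c, ι_mem_cochains hc z, ?_⟩)
    (fun c hc z => ⟨κ z c, κ_mem_cochains hc z, ?_⟩) hc
  · simp [lieDer_zero_zero]
  · simp only [map_sub, ι_lieDer, hcomm z _ (contractionRelations hc).isLinearMap_ι]
    abel
  · simp only [map_sub, κ_lieDer, hcomm z _ (contractionRelations hc).isLinearMap_κ]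
    abel

theorem lieDer_dLie (hc : c ∈ cochains F g) (x : g) : lieDer x (dLie c) = dLie (lieDer x c) := by
  refine eq_of_ι (p := (· ∈ cochains F g)) (T := fun c => lieDer x (dLie c))
    (T' := fun c => dLie (lieDer x c)) (fun c _ j => ?_)
    (fun c hc z => ⟨-ι z c, neg_mem (ι_mem_cochains hc z), ?_⟩) hc
  · rw [dLie_zero_left, lieDer_apply_eq_zero x (dLie_zero_left c j)]
  · simp only [map_sub, map_neg, ι_lieDer, ι_dLie hc, ι_dLie (lieDer_mem_cochains hc x),
      ← lieDer_lieDer hc]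
    abel

theorem lieDer_dKos (hc : c ∈ cochains F g) (x : g) : lieDer x (dKos c) = dKos (lieDer x c) := by
  refine eq_of_ι_κ (p := (· ∈ cochains F g)) (T := fun c => lieDer x (dKos c))
    (T' := fun c => dKos (lieDer x c)) (fun c _ => lieDer_zero_zero x _)
    (fun c hc z => ⟨-ι z c, neg_mem (ι_mem_cochains hc z), ?_⟩)
    (fun c hc z => ⟨κ z c, κ_mem_cochains hc z, ?_⟩) hc
  · simp only [map_sub, map_neg, ι_lieDer, ι_dKos hc, ι_dKos (lieDer_mem_cochains hc x)]
    abel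
  · simp only [map_sub, map_add, κ_lieDer, κ_dKos, ι_lieDer]
    abel

theorem lieDer_weilD (hc : c ∈ cochains F g) (x : g) :
    lieDer x (weilD c) = weilD (lieDer x c) := by
  simp only [weilD_apply, map_add, lieDer_dLie hc, lieDer_dKos hc]

theorem dLie_dLie (hc : c ∈ cochains F g) : dLie (dLie c) = 0 := by
  refine eq_of_ι (p := (· ∈ cochains F g)) (T := fun c => dLie (dLie c)) (T' := 0)
    (fun c _ j => dLie_zero_left _ _) (fun c hc z => ⟨ι z c, ι_mem_cochains hc z, ?_⟩) hc
  simp [ι_dLie hc, ι_dLie (dLie_mem_cochains hc), lieDer_dLie hc]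

theorem symMul_lieSym_self (hc : c ∈ cochains F g) : (symMul fun y => lieSym y c) = 0 := by
  refine eq_of_ι_κ (p := (· ∈ cochains F g)) (T := fun c => symMul fun y => lieSym y c) (T' := 0)
    (fun c _ => rfl) (fun c hc z => ⟨ι z c, ι_mem_cochains hc z, ?_⟩)
    (fun c hc z => ⟨κ z c, κ_mem_cochains hc z, ?_⟩) hc
  · simp [ι_symMul, ι_lieSym]
  · have hskew : (fun y => κ ⁅y, z⁆ c) = fun y => -κ ⁅z, y⁆ c := by
      ext1 y
      rw [← lie_skew, (contractionRelations hc).isLinearMap_κ.map_neg]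
    simp [κ_symMul, κ_lieSym, symMul_sub, lieSym_eq hc z, hskew, symMul_neg]

theorem dLie_dKos (hc : c ∈ cochains F g) : dLie (dKos c) = -dKos (dLie c) := by
  refine eq_of_ι (p := (· ∈ cochains F g)) (T := fun c => dLie (dKos c))
    (T' := fun c => -dKos (dLie c)) (fun c hc j => ?_)
    (fun c hc z => ⟨ι z c, ι_mem_cochains hc z, ?_⟩) hc
  · have hdKos : dKos (dLie c) = symMul fun y => lieExt y c - dLie (ι y c) := by
      simp only [dKos_apply, ι_dLie hc, lieDer, LinearMap.add_apply, symMul_sub, symMul_add,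
        symMul_lieSym_self hc, add_zero]
    rw [dLie_zero_left, hdKos, Pi.neg_apply, Pi.neg_apply, symMul_apply_eq_zero _ j, neg_zero]
    exact fun y j => (congrArg₂ (· - ·) (lieExt_zero_left y c j) (dLie_zero_left _ j)).trans
      (sub_zero 0)
  · simp only [map_neg, ι_dLie hc, ι_dLie (dKos_mem_cochains hc), ι_dKos hc,
      ι_dKos (dLie_mem_cochains hc), map_sub, lieDer_dKos hc]
    abel

theorem weilD_weilD (hc : c ∈ cochains F g) : weilD (weilD c) = 0 := by
  simp only [weilD_apply, map_add, dLie_dLie hc, dKos_dKos hc, dLie_dKos hc]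
  abel

end Cartan

section LieDerMul

variable {F : Type*} [Field F] {g : Type*} [LieRing g]

theorem lieDer_extMul (x : g) (f : g → WeilFamily F g) :
    lieDer x (extMul f) = extMul fun y => lieDer x (f y) - f ⁅x, y⁆ := by
  refine eq_of_ι (p := fun _ : g → WeilFamily F g => True) (T := fun f => lieDer x (extMul f))
    (T' := fun f => extMul fun y => lieDer x (f y) - f ⁅x, y⁆)
    (fun f _ j => lieDer_apply_eq_zero x (extMul_zero_left f j))
    (fun f _ z => ⟨fun y => -ι z (f y), trivial, ?_⟩) trivial
  simp only [map_sub, map_neg, ι_lieDer, ι_extMul, extMul_sub, extMul_neg]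
  abel

theorem lieDer_symMul (x : g) (f : g → WeilFamily F g) :
    lieDer x (symMul f) = symMul fun y => lieDer x (f y) - f ⁅x, y⁆ := by
  refine eq_of_ι_κ (p := fun _ : g → WeilFamily F g => True) (T := fun f => lieDer x (symMul f))
    (T' := fun f => symMul fun y => lieDer x (f y) - f ⁅x, y⁆)
    (fun f _ => lieDer_zero_zero x _) (fun f _ z => ⟨fun y => ι z (f y), trivial, ?_⟩)
    (fun f _ z => ⟨fun y => κ z (f y), trivial, ?_⟩) trivial
  · simp only [map_sub, ι_lieDer, ι_symMul, symMul_sub]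
    abel
  · simp only [map_sub, map_add, κ_lieDer, κ_symMul, symMul_sub]
    abel

end LieDerMul

theorem inv_two_smul_add_inv_two_smul {K V : Type*} [DivisionRing K] [NeZero (2 : K)]
    [AddCommGroup V] [Module K V] (x : V) : (2⁻¹ : K) • x + (2⁻¹ : K) • x = x := by
  rw [← smul_add, ← two_smul K, inv_smul_smul₀ two_ne_zero]

theorem extMul_extMul_eq_half {K M : Type*} [Field K] [NeZero (2 : K)]
    (f : M → M → WeilFamily K M) :
    (extMul fun y => extMul fun z => f y z) =
      (2⁻¹ : K) • extMul fun y => extMul fun z => f y z - f z y := by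
  simp only [extMul_sub]
  rw [extMul_extMul fun y z => f z y, sub_neg_eq_add, smul_add, inv_two_smul_add_inv_two_smul]

section Curvature

variable {F : Type*} [Field F] {g : Type*} [LieRing g] [LieAlgebra F g]

/-- The curvature of the connection `pr`, as a bilinear map. -/
def curvature (pr : g →ₗ[F] g) : g →ₗ[F] g →ₗ[F] g :=
  LinearMap.mk₂ F (curvW F g pr)
    (fun _ _ _ => by simp only [curvW, map_add, add_lie]; abel)
    (fun _ _ _ => by simp only [curvW, map_smul, smul_lie, smul_sub])
    (fun _ _ _ => by simp only [curvW, map_add, lie_add]; abel)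
    (fun _ _ _ => by simp only [curvW, map_smul, lie_smul, smul_sub])

variable (pr : g →ₗ[F] g)

theorem curvature_apply (x y : g) : curvature pr x y = ⁅pr x, pr y⁆ - pr ⁅x, y⁆ := rfl

theorem curvature_skew (x y : g) : -curvature pr y x = curvature pr x y := by
  rw [curvature_apply, curvature_apply, ← lie_skew, ← lie_skew x y, map_neg]
  abel

theorem curvature_bianchi (x y z : g) :
    curvature pr x ⁅y, z⁆ - curvature pr ⁅x, y⁆ z - curvature pr y ⁅x, z⁆ =
      ⁅pr y, curvature pr x z⁆ - ⁅pr z, curvature pr x y⁆ - ⁅pr x, curvature pr y z⁆ := by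
  simp only [curvature_apply, lie_sub]
  rw [lie_lie x y z, map_sub, ← lie_skew (pr ⁅x, y⁆) (pr z), ← lie_skew (pr z) ⁅pr x, pr y⁆,
    lie_lie (pr x)]
  abel

/-- Multiplication `∑ F^a · f e_a` by the curvature of the connection `pr` in the Weil algebra:
its symmetric part is `pr`, its exterior part is `curvature pr`. -/
def curvMul : (g → WeilFamily F g) →ₗ[F] WeilFamily F g where
  toFun f := (symMul fun y => f (pr y)) +
    (2⁻¹ : F) • extMul fun y => extMul fun z => f (curvature pr y z)
  map_add' f f' := by
    simp only [Pi.add_apply, symMul_add, extMul_add, smul_add]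
    abel
  map_smul' s f := by
    simp only [Pi.smul_apply, symMul_smul, extMul_smul, smul_add, smul_comm s, RingHom.id_apply]

theorem curvMul_apply (f : g → WeilFamily F g) :
    curvMul pr f = (symMul fun y => f (pr y)) +
      (2⁻¹ : F) • extMul fun y => extMul fun z => f (curvature pr y z) := rfl

theorem curvMul_sub (f f' : g → WeilFamily F g) :
    (curvMul pr fun y => f y - f' y) = curvMul pr f - curvMul pr f' := map_sub (curvMul pr) f f'

theorem curvMul_neg (f : g → WeilFamily F g) : (curvMul pr fun y => -f y) = -curvMul pr f :=
  map_neg (curvMul pr) f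

theorem curvMul_extMul (f : g → g → WeilFamily F g) :
    (curvMul pr fun x => extMul fun y => f x y) = extMul fun y => curvMul pr fun x => f x y := by
  have hext : ∀ x, (extMul fun z => extMul fun y => f (curvature pr x z) y) =
      -extMul fun y => extMul fun z => f (curvature pr x z) y := fun x => extMul_extMul _
  simp only [curvMul_apply, symMul_extMul, hext, extMul_neg, extMul_add, extMul_smul]
  rw [extMul_extMul fun x y => extMul fun z => f (curvature pr x z) y, neg_neg]

variable {pr} {f : g → WeilFamily F g}

theorem curvature_mem_cochainMaps (hf : f ∈ cochainMaps F g) :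
    (fun y => extMul fun z => f (curvature pr y z)) ∈ cochainMaps F g :=
  ⟨(extMul ∘ₗ (LinearMap.pi fun z => hf.1.mk' ∘ₗ (curvature pr).flip z)).isLinear,
    fun y => extMul_mem_cochains (comp_mem_cochainMaps hf (curvature pr y))⟩

theorem curvMul_mem_cochains (hf : f ∈ cochainMaps F g) : curvMul pr f ∈ cochains F g :=
  add_mem (symMul_mem_cochains (comp_mem_cochainMaps hf pr))
    (Submodule.smul_mem _ _ (extMul_mem_cochains (curvature_mem_cochainMaps hf)))

theorem lieDer_curvMul (f : g → WeilFamily F g) (x : g) :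
    lieDer x (curvMul pr f) = curvMul pr (fun y => lieDer x (f y)) - (symMul fun y => f (pr ⁅x, y⁆))
      - (2⁻¹ : F) • extMul fun y => extMul fun z =>
        f (curvature pr ⁅x, y⁆ z) + f (curvature pr y ⁅x, z⁆) := by
  simp only [curvMul_apply, map_add, map_smul, lieDer_symMul, lieDer_extMul, symMul_sub, extMul_sub,
    extMul_add, smul_sub, smul_add]
  abel

theorem curvMul_congr {h : LieSubalgebra F g} (hpr : IsEqProj F g h pr)
    {f f' : g → WeilFamily F g} (hff' : ∀ x ∈ h, f x = f' x) : curvMul pr f = curvMul pr f' := by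
  have hcurv (x y : g) : curvature pr x y ∈ h :=
    h.sub_mem (h.lie_mem (hpr.1 x) (hpr.1 y)) (hpr.1 _)
  simp only [curvMul_apply, hff' _ (hpr.1 _), hff' _ (hcurv _ _)]

variable [NeZero (2 : F)]

/-- The Cartan structure equation. -/
theorem weilD_extMul (hf : f ∈ cochainMaps F g) :
    weilD (extMul f) = symMul f - (extMul fun y => weilD (f y)) -
      (2⁻¹ : F) • extMul fun y => extMul fun z => f ⁅y, z⁆ := by
  refine eq_of_ι (p := (· ∈ cochainMaps F g)) (T := fun f => weilD (extMul f))
    (T' := fun f => symMul f - (extMul fun y => weilD (f y)) -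
      (2⁻¹ : F) • extMul fun y => extMul fun z => f ⁅y, z⁆) (fun f _ j => ?_)
    (fun f hf x => ⟨fun y => ι x (f y),
      map_comp_mem_cochainMaps hf fun _ h => ι_mem_cochains h x, ?_⟩) hf
  · simp [weilD_apply, dLie_zero_left, dKos_extMul, extMul_zero_left]
  · have hbr : (extMul fun y => f ⁅y, x⁆) = -extMul fun y => f ⁅x, y⁆ := by
      rw [← extMul_neg]
      congr 1 with y : 1
      rw [← lie_skew, hf.1.map_neg]
    have hhalf := inv_two_smul_add_inv_two_smul (K := F) (extMul fun y => f ⁅x, y⁆)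
    simp only [map_sub, map_smul, ι_weilD (extMul_mem_cochains hf), ι_extMul, ι_symMul,
      lieDer_extMul, extMul_sub, ι_weilD (hf.2 _), hbr, smul_sub, smul_neg]
    nth_rw 1 [← hhalf]
    abel

theorem ι_curvMul (hf : f ∈ cochainMaps F g) (x : g) :
    ι x (curvMul pr f) =
      curvMul pr (fun y => ι x (f y)) + extMul fun y => f (curvature pr x y) := by
  have hskew : (fun y => f (curvature pr y x)) = fun y => -f (curvature pr x y) := by
    ext1 y
    rw [← curvature_skew, hf.1.map_neg]
  conv_rhs => rw [← inv_two_smul_add_inv_two_smul (K := F) (extMul fun y => f (curvature pr x y))]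
  simp only [curvMul_apply, map_add, map_smul, ι_symMul, ι_extMul, extMul_sub, hskew, extMul_neg,
    smul_sub, smul_neg]
  abel

theorem lieDer_curvMul_sub (hf : f ∈ cochainMaps F g) (x : g) :
    lieDer x (curvMul pr f) - curvMul pr (fun y => lieDer x (f y)) +
        curvMul pr (fun y => f ⁅pr x, y⁆) =
      weilD (extMul fun y => f (curvature pr x y)) +
        (extMul fun y => weilD (f (curvature pr x y))) +
        extMul fun y => extMul fun z => f ⁅pr y, curvature pr x z⁆ := by
  have hbianchi : (fun y z => f (curvature pr x ⁅y, z⁆)) = fun y z =>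
      f (curvature pr ⁅x, y⁆ z) + f (curvature pr y ⁅x, z⁆) +
        (f ⁅pr y, curvature pr x z⁆ - f ⁅pr z, curvature pr x y⁆) -
        f ⁅pr x, curvature pr y z⁆ := by
    ext1 y; ext1 z
    simp only [← hf.1.map_add, ← hf.1.map_sub]
    congr 1
    rw [sub_eq_iff_eq_add.1 (sub_eq_iff_eq_add.1 (curvature_bianchi pr x y z))]
    abel
  have hcurv : (fun y => f (curvature pr x y)) = fun y => f ⁅pr x, pr y⁆ - f (pr ⁅x, y⁆) := by
    simp only [curvature_apply, hf.1.map_sub]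
  rw [weilD_extMul (comp_mem_cochainMaps hf (curvature pr x)), lieDer_curvMul,
    extMul_extMul_eq_half fun y z => f ⁅pr y, curvature pr x z⁆]
  simp only [congrFun₂ hbianchi, curvMul_apply, extMul_add, extMul_sub, smul_add, smul_sub]
  simp only [hcurv, symMul_sub]
  abel

/-- The Bianchi identity. -/
theorem weilD_curvMul (hf : f ∈ cochainMaps F g) :
    weilD (curvMul pr f) = curvMul pr (fun y => weilD (f y)) -
      extMul fun y => curvMul pr fun z => f ⁅pr y, z⁆ := by
  refine eq_of_ι (p := (· ∈ cochainMaps F g)) (T := fun f => weilD (curvMul pr f))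
    (T' := fun f => curvMul pr (fun y => weilD (f y)) -
      extMul fun y => curvMul pr fun z => f ⁅pr y, z⁆) (fun f _ j => ?_)
    (fun f hf x => ⟨-fun y => ι x (f y),
      neg_mem (map_comp_mem_cochainMaps hf fun _ h => ι_mem_cochains h x), ?_⟩) hf
  · have hzero := symMul_apply_eq_zero (fun y j => dLie_zero_left (f (pr y)) j) j
    simp [weilD_apply, dLie_zero_left, curvMul_apply, extMul_zero_left, symMul_add, hzero,
      dKos_symMul, dKos_extMul, symMul_extMul]
  · have hlie (y : g) := ι_curvMul (pr := pr) (comp_mem_cochainMaps hf (LieAlgebra.ad F g (pr y))) x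
    have hweil := ι_curvMul (pr := pr) (map_comp_mem_cochainMaps hf fun _ => weilD_mem_cochains) x
    have h := lieDer_curvMul_sub (pr := pr) hf x
    simp only [LieAlgebra.ad_apply] at hlie
    simp only [map_sub, ι_weilD (curvMul_mem_cochains hf), ι_curvMul hf, ι_extMul, hlie, hweil,
      ι_weilD (hf.2 _), map_add, curvMul_sub, extMul_add, Pi.neg_apply, map_neg, curvMul_neg,
      extMul_neg]
    rw [← sub_eq_zero] at h ⊢
    refine Eq.trans ?_ h
    abel

end Curvature

section Support

variable {R : Type*} [CommRing R] {M : Type*} {j : ℕ}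

/-- A symmetric `j`-form as a Weil cochain of bidegree `(0, j)`. -/
def ofForm (j : ℕ) (P : (Fin j → M) → R) : WeilFamily R M := Pi.single 0 (Pi.single j fun _ => P)

variable (R M) in
/-- The families supported in the bidegrees `(i, j)` with `S i j`. -/
def supportedIn (S : ℕ → ℕ → Prop) : Submodule R (WeilFamily R M) where
  carrier := {c | ∀ i j, ¬S i j → c i j = 0}
  add_mem' ha hb i j hij := by simp [ha i j hij, hb i j hij]
  zero_mem' _ _ _ := rfl
  smul_mem' s _ ha i j hij := by simp [ha i j hij]

theorem ofForm_zero_left (P : (Fin j → M) → R) (v : Fin 0 → M) : ofForm j P 0 j v = P := by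
  simp [ofForm]

end Support

section Polys

variable {R : Type*} [CommRing R] {M : Type*} [AddCommGroup M] [Module R M] {j : ℕ}

variable (R M j) in
/-- The symmetric `j`-forms, as the Weil cochains concentrated in bidegree `(0, j)`. -/
def polys : Submodule R (WeilFamily R M) :=
  cochains R M ⊓ supportedIn R M fun i j' => i = 0 ∧ j' = j

theorem ofForm_mem_polys {P : (Fin j → M) → R} (hP : P ∈ symForms R M j) :
    ofForm j P ∈ polys R M j := by
  have hzero (i j' : ℕ) (hij : ¬(i = 0 ∧ j' = j)) : ofForm j P i j' = 0 := by
    by_cases hi : i = 0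
    · subst hi
      simp [ofForm, Pi.single_eq_of_ne fun hj => hij ⟨rfl, hj⟩]
    · simp [ofForm, hi]
  refine ⟨⟨fun i j' w => ?_, fun i j' v => ?_⟩, hzero⟩ <;> by_cases hij : i = 0 ∧ j' = j
  · obtain ⟨rfl, rfl⟩ := hij
    simp only [ofForm_zero_left]
    exact ⟨AlternatingMap.constOfIsEmpty R M (Fin 0) (P w), rfl⟩
  · rw [hzero i j' hij]
    exact zero_mem _
  · obtain ⟨rfl, rfl⟩ := hij
    rwa [ofForm_zero_left]
  · rw [hzero i j' hij]
    exact zero_mem _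

theorem κ_mem_polys {c : WeilFamily R M} (hc : c ∈ polys R M (j + 1)) (x : M) :
    κ x c ∈ polys R M j := by
  refine ⟨κ_mem_cochains hc.1 x, fun i j' hij => ?_⟩
  ext v w
  rw [κ_apply, hc.2 i (j' + 1) (by simpa using hij)]
  rfl

theorem ι_eq_zero_of_mem_polys {c : WeilFamily R M} (hc : c ∈ polys R M j) (x : M) :
    ι x c = 0 := by
  ext i j' v w
  rw [ι_apply, hc.2 (i + 1) j' (by simp)]
  rfl

end Polys

section ChernWeil

variable {F : Type*} [Field F] {g : Type*} [LieRing g] [LieAlgebra F g] {j : ℕ} {c : WeilFamily F g}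

theorem lieDer_mem_polys (hc : c ∈ polys F g j) (x : g) : lieDer x c ∈ polys F g j :=
  ⟨lieDer_mem_cochains hc.1 x, fun i j' hij => lieDer_apply_eq_zero x (hc.2 i j' hij)⟩

theorem lieDer_eq_zero_of_mem_polys_zero (hc : c ∈ polys F g 0) (x : g) : lieDer x c = 0 := by
  ext1 i; ext1 j
  by_cases hij : i = 0 ∧ j = 0
  · obtain ⟨rfl, rfl⟩ := hij
    exact lieDer_zero_zero x c
  · exact lieDer_apply_eq_zero x (hc.2 i j hij)

theorem weilD_eq_zero_of_mem_polys_zero (hc : c ∈ polys F g 0) : weilD c = 0 := by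
  refine eq_of_ι (p := (· ∈ polys F g 0)) (T := weilD) (T' := 0) (fun c hc j => ?_)
    (fun c hc x => ⟨0, zero_mem _, ?_⟩) hc
  · simp [weilD_apply, dLie_zero_left, dKos_apply, ι_eq_zero_of_mem_polys hc, ← Pi.zero_def]
  · simp [ι_weilD hc.1, ι_eq_zero_of_mem_polys hc, lieDer_eq_zero_of_mem_polys_zero hc]

/-- The Chern–Weil homomorphism `c ↦ (1/j!) ⟨c, F^j⟩`, `F` the curvature of the connection `pr`,
defined by recursion on `j`: contract one symmetric variable of `c` with `F` at a time. -/
def chern (pr : g →ₗ[F] g) : ℕ → WeilFamily F g →ₗ[F] WeilFamily F g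
  | 0 => LinearMap.id
  | j + 1 => ((j + 1 : ℕ) : F)⁻¹ • curvMul pr ∘ₗ LinearMap.pi fun x => chern pr j ∘ₗ κ x

variable (pr : g →ₗ[F] g)

theorem chern_zero (c : WeilFamily F g) : chern pr 0 c = c := rfl

theorem chern_succ (j : ℕ) (c : WeilFamily F g) :
    chern pr (j + 1) c = ((j + 1 : ℕ) : F)⁻¹ • curvMul pr fun x => chern pr j (κ x c) := rfl

theorem chern_mem_cochains (hc : c ∈ cochains F g) (j : ℕ) : chern pr j c ∈ cochains F g := by
  induction j generalizing c with
  | zero => exact hc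
  | succ j ih =>
    exact Submodule.smul_mem _ _ <|
      curvMul_mem_cochains (map_comp_mem_cochainMaps (κ_mem_cochainMaps hc) fun _ => ih)

theorem chern_comp_κ_mem_cochainMaps (hc : c ∈ cochains F g) (j : ℕ) :
    (fun x => chern pr j (κ x c)) ∈ cochainMaps F g :=
  map_comp_mem_cochainMaps (κ_mem_cochainMaps hc) fun _ h => chern_mem_cochains pr h j

theorem weilD_chern [NeZero (2 : F)] (hc : c ∈ polys F g j) :
    weilD (chern pr j c) = extMul fun y => chern pr j (lieDer (pr y) c) := by
  induction j generalizing c with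
  | zero =>
    simp [weilD_eq_zero_of_mem_polys_zero hc, lieDer_eq_zero_of_mem_polys_zero hc, chern_zero,
      ← Pi.zero_def]
  | succ j ih =>
    simp only [chern_succ, map_smul, weilD_curvMul (chern_comp_κ_mem_cochainMaps pr hc.1 j),
      ih (κ_mem_polys hc _), κ_lieDer, map_sub, curvMul_sub, curvMul_extMul, extMul_smul,
      extMul_sub]

variable {pr} {h : LieSubalgebra F g}

theorem chern_eq_zero_of_eqOn (hpr : IsEqProj F g h pr) (hc : c ∈ polys F g j)
    (hzero : ∀ v w, (∀ r, w r ∈ h) → c 0 j v w = 0) : chern pr j c = 0 := by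
  induction j generalizing c with
  | zero =>
    ext1 i; ext1 j
    by_cases hij : i = 0 ∧ j = 0
    · obtain ⟨rfl, rfl⟩ := hij
      ext v w
      exact hzero v w fun r => r.elim0
    · exact hc.2 i j hij
  | succ j ih =>
    have hκ (x : g) (hx : x ∈ h) : chern pr j (κ x c) = 0 :=
      ih (κ_mem_polys hc x) fun v w hw => hzero v _ (Fin.cases hx hw)
    rw [chern_succ, curvMul_congr hpr (f' := 0) hκ, map_zero, smul_zero]

theorem weilD_chern_eq_zero [NeZero (2 : F)] (hpr : IsEqProj F g h pr) (hc : c ∈ polys F g j)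
    (hinv : ∀ x ∈ h, ∀ v w, (∀ r, w r ∈ h) → lieDer x c 0 j v w = 0) :
    weilD (chern pr j c) = 0 := by
  have hzero (y : g) : chern pr j (lieDer (pr y) c) = 0 :=
    chern_eq_zero_of_eqOn hpr (lieDer_mem_polys hc _) (hinv _ (hpr.1 y))
  simp only [weilD_chern pr hc, hzero]
  exact map_zero extMul

theorem curvature_eq_zero_of_mem (hpr : IsEqProj F g h pr) {x : g} (hx : x ∈ h) :
    curvature pr x = 0 := by
  ext y
  rw [curvature_apply, hpr.2.1 x hx, hpr.2.2 x hx, sub_self, LinearMap.zero_apply]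

theorem ι_chern_eq_zero [NeZero (2 : F)] (hpr : IsEqProj F g h pr) (hc : c ∈ polys F g j) {x : g}
    (hx : x ∈ h) : ι x (chern pr j c) = 0 := by
  induction j generalizing c with
  | zero => exact ι_eq_zero_of_mem_polys hc x
  | succ j ih =>
    have hf := chern_comp_κ_mem_cochainMaps pr hc.1 j
    have hcurv (y : g) : chern pr j (κ (curvature pr x y) c) = 0 := by
      rw [curvature_eq_zero_of_mem hpr hx]
      exact hf.1.map_zero
    rw [chern_succ, map_smul, ι_curvMul hf]
    simp only [ih (κ_mem_polys hc _), hcurv, ← Pi.zero_def, map_zero, add_zero, smul_zero]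

theorem lieDer_chern_eq_zero [NeZero (2 : F)] (hpr : IsEqProj F g h pr) (hc : c ∈ polys F g j)
    (hinv : ∀ x ∈ h, ∀ v w, (∀ r, w r ∈ h) → lieDer x c 0 j v w = 0) {x : g} (hx : x ∈ h) :
    lieDer x (chern pr j c) = 0 := by
  have hι := ι_weilD (chern_mem_cochains pr hc.1 j) x
  rw [weilD_chern_eq_zero hpr hc hinv, ι_chern_eq_zero hpr hc hx, map_zero, map_zero,
    sub_zero] at hι
  exact hι.symm

end ChernWeil

section AlternatingSums

variable {R : Type*} [CommRing R]

/-- The sum `∑ sign σ • G (v ∘ σ)` over all permutations of the arguments. -/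
def altSum {M : Type*} {n : ℕ} (G : (Fin n → M) → R) (v : Fin n → M) : R :=
  ∑ σ : Equiv.Perm (Fin n), ((Equiv.Perm.sign σ : ℤ) : R) * G (v ∘ σ)

theorem altSum_succ {M : Type*} {n : ℕ} (G : (Fin (n + 1) → M) → R) (v : Fin (n + 1) → M) :
    altSum G v = ∑ t : Fin (n + 1), (-1) ^ (t : ℕ) *
      altSum (fun u => G (Fin.cons (v t) u)) (t.removeNth v) := by
  let Φ (p : Fin (n + 1) × Equiv.Perm (Fin n)) : Equiv.Perm (Fin (n + 1)) :=
    p.1.cycleRange.symm * Equiv.Perm.decomposeFin.symm (0, p.2)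
  have hΦ : Function.Bijective Φ := by
    refine (Fintype.bijective_iff_injective_and_card Φ).2 ⟨?_, ?_⟩
    · rintro ⟨t, τ⟩ ⟨t', τ'⟩ hp
      obtain rfl : t = t' := by simpa [Φ] using congrArg (· 0) hp
      simpa [Φ] using hp
    · simp [Fintype.card_perm, Nat.factorial_succ]
  have hsign (t : Fin (n + 1)) (τ) :
      Equiv.Perm.sign (Φ (t, τ)) = (-1) ^ (t : ℕ) * Equiv.Perm.sign τ := by
    simp [Φ]
  have hcomp (t : Fin (n + 1)) (τ) : v ∘ Φ (t, τ) = Fin.cons (v t) (t.removeNth v ∘ τ) := by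
    ext m
    cases m using Fin.cases <;> simp [Φ, Fin.removeNth]
  simp only [altSum, ← hΦ.sum_comp, Fintype.sum_prod_type, hsign, hcomp, Finset.mul_sum]
  push_cast
  simp only [mul_assoc]

theorem two_pow_card_mul_sum_ordered {α β : Type*} [Fintype α] [LinearOrder α] {a b : β → α}
    (ha : Function.Injective a) (hb : Function.Injective b) (hab : ∀ s t, a s ≠ b t)
    {G : Equiv.Perm α → R} (hG : ∀ σ t, G (σ * Equiv.swap (a t) (b t)) = G σ) (s : Finset β) :
    2 ^ s.card * ∑ σ with ∀ t ∈ s, σ (a t) < σ (b t), G σ = ∑ σ, G σ := by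
  induction s using Finset.cons_induction with
  | empty => simp
  | cons m s hm ih =>
    have hswap (σ : Equiv.Perm α) :
        (∀ t ∈ s, (σ * Equiv.swap (a m) (b m)) (a t) < (σ * Equiv.swap (a m) (b m)) (b t)) ↔
          ∀ t ∈ s, σ (a t) < σ (b t) := by
      refine forall₂_congr fun t ht => ?_
      have htm : t ≠ m := ne_of_mem_of_not_mem ht hm
      rw [Equiv.Perm.mul_apply, Equiv.Perm.mul_apply,
        Equiv.swap_apply_of_ne_of_ne (ha.ne htm) (hab _ _),
        Equiv.swap_apply_of_ne_of_ne (hab _ _).symm (hb.ne htm)]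
    have hhalf : ∑ σ with (∀ t ∈ s, σ (a t) < σ (b t)) ∧ ¬σ (a m) < σ (b m), G σ =
        ∑ σ with (∀ t ∈ s, σ (a t) < σ (b t)) ∧ σ (a m) < σ (b m), G σ := by
      refine Finset.sum_equiv (Equiv.mulRight (Equiv.swap (a m) (b m))) (fun σ => ?_)
        fun σ _ => (hG σ m).symm
      have hne : σ (b m) ≠ σ (a m) := σ.injective.ne (hab m m).symm
      simp only [Finset.mem_filter_univ, Equiv.coe_mulRight, hswap]
      simp [hne.le_iff_lt]
    have hsplit : ∑ σ with (∀ t ∈ s, σ (a t) < σ (b t)) ∧ σ (a m) < σ (b m), G σ +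
        ∑ σ with (∀ t ∈ s, σ (a t) < σ (b t)) ∧ ¬σ (a m) < σ (b m), G σ =
        ∑ σ with ∀ t ∈ s, σ (a t) < σ (b t), G σ := by
      rw [← Finset.filter_filter, ← Finset.filter_filter, Finset.sum_filter_add_sum_filter_not]
    rw [← ih, ← hsplit, hhalf, Finset.card_cons]
    simp only [Finset.forall_mem_cons, and_comm (a := _ < _)]
    ring

end AlternatingSums

theorem apply_cons_removeNth {R M : Type*} [CommRing R] [AddCommGroup M] [Module R M] {n : ℕ}
    {P : (Fin (n + 1) → M) → R} (hP : P ∈ symForms R M (n + 1)) (w : Fin (n + 1) → M)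
    (r : Fin (n + 1)) : P (Fin.cons (w r) (r.removeNth w)) = P w := by
  obtain ⟨s, rfl, hs⟩ := hP
  rw [Fin.cons_removeNth_eq_comp_cycleRange_symm, hs]

section CurvatureTuple

variable {F : Type*} [Field F] {g : Type*} [LieRing g] [LieAlgebra F g] (pr : g →ₗ[F] g)
  {i j' j : ℕ}

/-- The arguments `C(u₁, u₂), …, C(uᵢ₋₁, uᵢ), pr w₁, …, pr wⱼ'` of an invariant polynomial in the
explicit formula for the characteristic homomorphism. -/
def curvatureTuple (hij : i % 2 = 0 ∧ i / 2 + j' = j) (u : Fin i → g) (w : Fin j' → g) (t : Fin j) :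
    g :=
  if ht : t.1 < i / 2 then curvature pr (u ⟨2 * t.1, by omega⟩) (u ⟨2 * t.1 + 1, by omega⟩)
  else pr (w ⟨t.1 - i / 2, by omega⟩)

theorem curvatureTuple_cons_cons (hij : i % 2 = 0 ∧ i / 2 + j' = j)
    (hij' : (i + 2) % 2 = 0 ∧ (i + 2) / 2 + j' = j + 1) (x y : g) (u : Fin i → g)
    (w : Fin j' → g) :
    curvatureTuple pr hij' (Fin.cons x (Fin.cons y u)) w =
      Fin.cons (curvature pr x y) (curvatureTuple pr hij u w) := by
  ext t
  cases t using Fin.cases with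
  | zero => exact dif_pos (show 0 < (i + 2) / 2 by omega)
  | succ t =>
    by_cases ht : t.1 < i / 2
    · have ht' : t.1 + 1 < (i + 2) / 2 := by omega
      simp only [curvatureTuple, Fin.val_succ, Fin.cons_succ, dif_pos ht, dif_pos ht']
      rfl
    · have ht' : ¬t.1 + 1 < (i + 2) / 2 := by omega
      simp only [curvatureTuple, Fin.val_succ, Fin.cons_succ, dif_neg ht, dif_neg ht']
      congr! 3
      omega

theorem curvatureTuple_natAdd (hij : i % 2 = 0 ∧ i / 2 + (j' + 1) = j + 1) (u : Fin i → g)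
    (w : Fin (j' + 1) → g) (r : Fin (j' + 1)) :
    curvatureTuple pr hij u w ⟨i / 2 + r, by omega⟩ = pr (w r) := by
  simp [curvatureTuple]

theorem removeNth_curvatureTuple (hij : i % 2 = 0 ∧ i / 2 + j' = j)
    (hij' : i % 2 = 0 ∧ i / 2 + (j' + 1) = j + 1) (u : Fin i → g) (w : Fin (j' + 1) → g)
    (r : Fin (j' + 1)) :
    Fin.removeNth ⟨i / 2 + r, by omega⟩ (curvatureTuple pr hij' u w) =
      curvatureTuple pr hij u (r.removeNth w) := by
  ext t
  rw [Fin.removeNth_apply]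
  by_cases hti : t.1 < i / 2
  · rw [Fin.succAbove_of_castSucc_lt _ _ (by simpa [Fin.lt_def] using by omega)]
    simp [curvatureTuple, hti]
  · have hw : r.succAbove ⟨t.1 - i / 2, by omega⟩ =
        ⟨(Fin.succAbove (n := j) ⟨i / 2 + r, by omega⟩ t).1 - i / 2, by omega⟩ := by
      simp only [Fin.ext_iff, Fin.succAbove, Fin.lt_def]
      grind
    have ht' : ¬ (Fin.succAbove (n := j) ⟨i / 2 + r, by omega⟩ t).1 < i / 2 := by
      simp only [Fin.succAbove, Fin.lt_def]
      grind
    rw [curvatureTuple, curvatureTuple, dif_neg hti, dif_neg ht', Fin.removeNth_apply, hw]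

/-- The explicit formula for the characteristic homomorphism, as a sum over all permutations instead
of those increasing on each pair `{2t, 2t + 1}`; hence the additional factor `2 ^ (i / 2)`. -/
def altChern (pr : g →ₗ[F] g) (j : ℕ) (P : (Fin j → g) → F) : WeilFamily F g := fun i j' v w =>
  if hij : i % 2 = 0 ∧ i / 2 + j' = j then
    ((i / 2).factorial * 2 ^ (i / 2) : F)⁻¹ * altSum (fun u => P (curvatureTuple pr hij u w)) v
  else 0

variable {pr} in
theorem altChern_apply (hij : i % 2 = 0 ∧ i / 2 + j' = j) (P : (Fin j → g) → F) (v : Fin i → g)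
    (w : Fin j' → g) : altChern pr j P i j' v w =
      ((i / 2).factorial * 2 ^ (i / 2) : F)⁻¹ * altSum (fun u => P (curvatureTuple pr hij u w)) v :=
  dif_pos hij

variable {pr} in
theorem altChern_eq_zero (hij : ¬(i % 2 = 0 ∧ i / 2 + j' = j)) (P : (Fin j → g) → F) :
    altChern pr j P i j' = 0 := by
  ext v w
  exact dif_neg hij

theorem symMul_altChern {P : (Fin (j + 1) → g) → F} (hP : P ∈ symForms F g (j + 1)) :
    (symMul fun y => altChern pr j fun w => P (Fin.cons (pr y) w)) i j' =
      (j' : F) • altChern pr (j + 1) P i j' := by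
  ext v w
  cases j' with
  | zero => simp [symMul_zero_right]
  | succ j' =>
    rw [symMul_succ]
    by_cases hij : i % 2 = 0 ∧ i / 2 + j' = j
    · have hij' : i % 2 = 0 ∧ i / 2 + (j' + 1) = j + 1 := by omega
      have hterm (r : Fin (j' + 1)) (u : Fin i → g) :
          P (Fin.cons (pr (w r)) (curvatureTuple pr hij u (r.removeNth w))) =
            P (curvatureTuple pr hij' u w) := by
        rw [← removeNth_curvatureTuple pr hij hij', ← curvatureTuple_natAdd pr hij' u,
          apply_cons_removeNth hP]
      simp [altChern_apply hij, altChern_apply hij', hterm]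
    · have hij' : ¬(i % 2 = 0 ∧ i / 2 + (j' + 1) = j + 1) := by omega
      simp [altChern_eq_zero hij, altChern_eq_zero hij']

theorem extMul_extMul_altChern [CharZero F] (P : (Fin (j + 1) → g) → F) :
    ((2⁻¹ : F) • extMul fun y => extMul fun z => altChern pr j fun w =>
      P (Fin.cons (curvature pr y z) w)) i j' = ((i / 2 : ℕ) : F) • altChern pr (j + 1) P i j' := by
  ext v w
  match i with
  | 0 => simp [extMul_zero_left]
  | 1 => simp [extMul_succ, extMul_zero_left]
  | i + 2 =>
    simp only [Pi.smul_apply, extMul_succ]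
    by_cases hij : i % 2 = 0 ∧ i / 2 + j' = j
    · have hij' : (i + 2) % 2 = 0 ∧ (i + 2) / 2 + j' = j + 1 := by omega
      have hfac : (((i / 2 + 1 : ℕ)) : F) ≠ 0 := Nat.cast_ne_zero.2 (by omega)
      simp only [altChern_apply hij, altChern_apply hij', altSum_succ, smul_eq_mul,
        curvatureTuple_cons_cons pr hij hij', mul_left_comm (_ ^ _) (_⁻¹), ← Finset.mul_sum,
        show (i + 2) / 2 = i / 2 + 1 by omega, Nat.factorial_succ]
      simp only [← mul_assoc]
      congr 1
      push_cast at hfac ⊢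
      have := Nat.cast_ne_zero (R := F).2 (i / 2).factorial_ne_zero
      field_simp
      ring
    · have hij' : ¬((i + 2) % 2 = 0 ∧ (i + 2) / 2 + j' = j + 1) := by omega
      simp [altChern_eq_zero hij, altChern_eq_zero hij']

theorem curvMul_altChern [CharZero F] {P : (Fin (j + 1) → g) → F} (hP : P ∈ symForms F g (j + 1)) :
    (curvMul pr fun x => altChern pr j fun w => P (Fin.cons x w)) =
      ((j + 1 : ℕ) : F) • altChern pr (j + 1) P := by
  ext1 i; ext1 j'
  rw [curvMul_apply, Pi.add_apply, Pi.add_apply, symMul_altChern pr hP, extMul_extMul_altChern,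
    ← add_smul]
  by_cases hij : i % 2 = 0 ∧ i / 2 + j' = j + 1
  · have hcast : ((j + 1 : ℕ) : F) = j' + (i / 2 : ℕ) := by rw [← hij.2, Nat.cast_add, add_comm]
    rw [hcast]
    rfl
  · simp [altChern_eq_zero hij]

theorem chern_eq_altChern [CharZero F] {c : WeilFamily F g} (hc : c ∈ polys F g j) :
    chern pr j c = altChern pr j (c 0 j Fin.elim0) := by
  induction j generalizing c with
  | zero =>
    ext i j' v w
    by_cases hij : i = 0 ∧ j' = 0
    · obtain ⟨rfl, rfl⟩ := hij
      suffices c 0 0 v w = c 0 0 Fin.elim0 (curvatureTuple pr (j := 0) (by simp) v w) by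
        simpa [chern_zero, altChern, altSum]
      congr!
    · rw [chern_zero, hc.2 i j' hij, altChern_eq_zero (by omega)]
  | succ j ih =>
    have hcurv := curvMul_altChern pr (hc.1.2 0 (j + 1) Fin.elim0)
    simp only [chern_succ, ih (κ_mem_polys hc _)]
    exact (congrArg _ hcurv).trans (inv_smul_smul₀ (Nat.cast_ne_zero.2 j.succ_ne_zero) _)

theorem curvatureTuple_comp_swap (hij : i % 2 = 0 ∧ i / 2 + j' = j) (u : Fin i → g)
    (w : Fin j' → g) (t : Fin (i / 2)) :
    curvatureTuple pr hij (u ∘ Equiv.swap ⟨2 * t, by omega⟩ ⟨2 * t + 1, by omega⟩) w =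
      Function.update (curvatureTuple pr hij u w) (Fin.castLE (by omega) t)
        ((-1 : F) • curvatureTuple pr hij u w (Fin.castLE (by omega) t)) := by
  ext s
  by_cases hst : s = Fin.castLE (by omega) t
  · subst hst
    simp only [Function.update_self, curvatureTuple, Fin.val_castLE, dif_pos t.2,
      Function.comp_apply]
    rw [Equiv.swap_apply_left, Equiv.swap_apply_right, neg_one_smul, curvature_skew]
  · rw [Function.update_of_ne hst]
    have hst' : s.1 ≠ t.1 := fun he => hst (Fin.ext he)
    by_cases hs : s.1 < i / 2
    · simp only [curvatureTuple, dif_pos hs, Function.comp_apply]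
      rw [Equiv.swap_apply_of_ne_of_ne, Equiv.swap_apply_of_ne_of_ne] <;>
        simp only [ne_eq, Fin.mk.injEq] <;> omega
    · simp only [curvatureTuple, dif_neg hs]

theorem chiW_eq_altChern [CharZero F] {P : (Fin j → g) → F} (hP : P ∈ symForms F g j) :
    chiW F g pr j P = altChern pr j P := by
  ext i j' v w
  by_cases hij : i % 2 = 0 ∧ i / 2 + j' = j
  · let a (t : Fin (i / 2)) : Fin i := ⟨2 * t, by omega⟩
    let b (t : Fin (i / 2)) : Fin i := ⟨2 * t + 1, by omega⟩
    let G (σ : Equiv.Perm (Fin i)) : F :=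
      ((Equiv.Perm.sign σ : ℤ) : F) * P (curvatureTuple pr hij (v ∘ σ) w)
    have hab (s t) : a s ≠ b t := by
      simp only [a, b, ne_eq, Fin.mk.injEq]
      omega
    have hG (σ t) : G (σ * Equiv.swap (a t) (b t)) = G σ := by
      obtain ⟨s, rfl, -⟩ := hP
      have htuple := curvatureTuple_comp_swap pr hij (v ∘ σ) w t
      simp only [G, Equiv.Perm.sign_mul, Equiv.Perm.sign_swap (hab t t), Equiv.Perm.coe_mul,
        ← Function.comp_assoc, a, b, htuple, s.map_update_smul, Function.update_eq_self]
      simp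
    have hsum := two_pow_card_mul_sum_ordered (a := a) (b := b)
      (fun s t hst => by simpa [a, Fin.ext_iff] using hst)
      (fun s t hst => by simpa [b, Fin.ext_iff] using hst) hab hG Finset.univ
    have hchi : chiW F g pr j P i j' v w =
        ((i / 2).factorial : F)⁻¹ * ∑ σ with ∀ t ∈ Finset.univ, σ (a t) < σ (b t), G σ := by
      simp only [chiW, dif_pos hij, zsmul_eq_mul, Finset.sum_filter, Finset.mem_univ,
        forall_true_left]
      rfl
    rw [hchi, altChern_apply hij, altSum, ← hsum, Finset.card_univ, Fintype.card_fin, mul_inv,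
      mul_assoc, inv_mul_cancel_left₀ (pow_ne_zero _ two_ne_zero)]
    congr!
  · rw [chiW, altChern_eq_zero hij, dif_neg hij]
    rfl

theorem chiW_eq_chern [CharZero F] {P : (Fin j → g) → F} (hP : P ∈ symForms F g j) :
    chiW F g pr j P = chern pr j (ofForm j P) := by
  rw [chern_eq_altChern pr (ofForm_mem_polys hP), ofForm_zero_left, chiW_eq_altChern pr hP]

theorem chiW_zero_left (P : (Fin j → g) → F) (v : Fin 0 → g) (w : Fin j → g) :
    chiW F g pr j P 0 j v w = P fun t => pr (w t) := by
  simp [chiW]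

theorem chiW_zero_right (P : (Fin j → g) → F) (v : Fin (2 * j) → g) (w : Fin 0 → g) :
    chiW F g pr j P (2 * j) 0 v w = chernW F g pr j P v := by
  have hj : 2 * j / 2 = j := by omega
  rw [chiW, dif_pos (by omega), chernW]
  refine congrArg₂ _ (by rw [hj]) (Finset.sum_congr rfl fun σ _ => if_congr ?_ ?_ rfl)
  · exact (finCongr hj).forall_congr fun _ => Iff.rfl
  · congr! 3
    rw [dif_pos (by omega)]

end CurvatureTuple

open Polynomial

section Polynomials

variable {R : Type*} [CommRing R] {M : Type*} [AddCommGroup M] [Module R M]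
  {N N' : Module.End R M} {A B : Submodule R M} {c : M}

theorem aeval_mem (hN : ∀ c ∈ A, N c ∈ A) (p : R[X]) (hc : c ∈ A) : aeval N p c ∈ A := by
  induction p using Polynomial.induction_on generalizing c with
  | C a => simpa using A.smul_mem a hc
  | add p q hp hq => simpa using A.add_mem (hp hc) (hq hc)
  | monomial n a ih => simpa [pow_succ, ← mul_assoc] using ih (hN c hc)

theorem aeval_sub_aeval_mem (hN' : ∀ c ∈ A, N' c ∈ A) (hN : ∀ c ∈ B, N c ∈ B)
    (hsub : ∀ c ∈ A, N' c - N c ∈ B) (p : R[X]) (hc : c ∈ A) :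
    aeval N' p c - aeval N p c ∈ B := by
  induction p using Polynomial.induction_on generalizing c with
  | C a => simp
  | add p q hp hq => simpa [add_sub_add_comm] using B.add_mem (hp hc) (hq hc)
  | monomial n a ih =>
    rw [pow_succ, ← mul_assoc, map_mul _ _ X, map_mul _ _ X, aeval_X, aeval_X,
      Module.End.mul_apply, Module.End.mul_apply]
    have := B.add_mem (ih (hN' c hc)) (aeval_mem hN (C a * X ^ n) (hsub c hc))
    rwa [map_sub, sub_add_sub_cancel] at this

theorem map_aeval_apply {T : Module.End R M} (e : R) (hN : ∀ c ∈ A, N c ∈ A)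
    (hT : ∀ c ∈ A, T (N c) = N (T c) + e • T c) (p : R[X]) (hc : c ∈ A) :
    T (aeval N p c) = aeval N (p.comp (X + C e)) (T c) := by
  induction p using Polynomial.induction_on generalizing c with
  | C a => simp
  | add p q hp hq => simp [hp hc, hq hc]
  | monomial n a ih =>
    rw [pow_succ, ← mul_assoc, map_mul, aeval_X, Module.End.mul_apply, ih (hN c hc), hT c hc,
      mul_comp (C a * X ^ n), X_comp, map_mul, Module.End.mul_apply]
    simp

end Polynomials

section Homotopy

variable {R : Type*} [CommRing R] {M : Type*} [AddCommGroup M]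

section Definitions

variable [Module R M] (pr : M →ₗ[R] M)

/-- The Koszul homotopy `∑ e^a ∧ κ (e_a - pr e_a)`, which turns a symmetric variable in the
direction of the complement `ker pr` into an exterior one. -/
def kosHomotopy : WeilFamily R M →ₗ[R] WeilFamily R M :=
  extMul ∘ₗ LinearMap.pi fun y => κ (y - pr y)

/-- The operator counting the arguments of either kind in the direction of `ker pr`. -/
def numberOp : Module.End R (WeilFamily R M) :=
  (symMul ∘ₗ LinearMap.pi fun y => κ (y - pr y)) + extMul ∘ₗ LinearMap.pi fun y => ι (y - pr y)

theorem kosHomotopy_apply (c : WeilFamily R M) :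
    kosHomotopy pr c = extMul fun y => κ (y - pr y) c := rfl

theorem numberOp_apply (c : WeilFamily R M) :
    numberOp pr c = (symMul fun y => κ (y - pr y) c) + extMul fun y => ι (y - pr y) c := rfl

theorem dKos_kosHomotopy (c : WeilFamily R M) :
    dKos (kosHomotopy pr c) + kosHomotopy pr (dKos c) = numberOp pr c := by
  simp only [kosHomotopy_apply, numberOp_apply, dKos_extMul, κ_dKos, extMul_add]
  abel

theorem ι_kosHomotopy (x : M) (c : WeilFamily R M) :
    ι x (kosHomotopy pr c) = κ (x - pr x) c - kosHomotopy pr (ι x c) := by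
  simp only [kosHomotopy_apply, ι_extMul, ι_κ]

variable {c : WeilFamily R M}

theorem κ_sub_mem_cochainMaps (hc : c ∈ cochains R M) :
    (fun y => κ (y - pr y) c) ∈ cochainMaps R M :=
  comp_mem_cochainMaps (κ_mem_cochainMaps hc) (LinearMap.id - pr)

theorem kosHomotopy_mem_cochains (hc : c ∈ cochains R M) : kosHomotopy pr c ∈ cochains R M :=
  extMul_mem_cochains (κ_sub_mem_cochainMaps pr hc)

theorem numberOp_mem_cochains (hc : c ∈ cochains R M) : numberOp pr c ∈ cochains R M := by
  rw [numberOp_apply]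
  exact add_mem (symMul_mem_cochains (κ_sub_mem_cochainMaps pr hc)) <|
    extMul_mem_cochains (comp_mem_cochainMaps (ι_mem_cochainMaps hc) (LinearMap.id - pr))

theorem ι_numberOp (hc : c ∈ cochains R M) (x : M) :
    ι x (numberOp pr c) = numberOp pr (ι x c) + ι (x - pr x) c := by
  simp only [numberOp_apply, map_add, ι_symMul, ι_extMul, ι_κ, ι_ι_comm hc x, extMul_neg]
  abel

theorem κ_numberOp (hc : c ∈ cochains R M) (x : M) :
    κ x (numberOp pr c) = numberOp pr (κ x c) + κ (x - pr x) c := by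
  simp only [numberOp_apply, map_add, κ_symMul, κ_extMul, κ_κ_comm hc x, ι_κ]
  abel

end Definitions

section Horizontal

variable [Module R M] {H : Submodule R M} {pr : M →ₗ[R] M} {c : WeilFamily R M}

/-- The horizontal Weil cochains: those annihilated by the contractions with `H`. -/
def horizontal (H : Submodule R M) : Submodule R (WeilFamily R M) where
  carrier := {c | c ∈ cochains R M ∧ ∀ x ∈ H, ι x c = 0}
  add_mem' ha hb := ⟨add_mem ha.1 hb.1, fun x hx => by simp [ha.2 x hx, hb.2 x hx]⟩
  zero_mem' := ⟨zero_mem _, fun _ _ => map_zero _⟩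
  smul_mem' s _ ha := ⟨Submodule.smul_mem _ s ha.1, fun x hx => by simp [ha.2 x hx]⟩

theorem apply_eq_zero_of_mem_horizontal (hc : c ∈ horizontal H) {i j : ℕ} {v : Fin i → M}
    (t : Fin i) {w : Fin j → M} (hv : v t ∈ H) : c i j v w = 0 := by
  cases i with
  | zero => exact t.elim0
  | succ i =>
    obtain ⟨a, ha⟩ := hc.1.1 (i + 1) j w
    have hswap : a (v ∘ Equiv.swap 0 t) = 0 := by
      rw [congrFun ha, ← Fin.cons_self_tail (v ∘ Equiv.swap 0 t), ← ι_apply _ c, hc.2 _ (by simpa)]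
      rfl
    rw [a.map_perm, smul_eq_zero_iff_eq] at hswap
    exact (congrFun ha v).symm.trans hswap

theorem κ_mem_horizontal (hc : c ∈ horizontal H) (x : M) : κ x c ∈ horizontal H :=
  ⟨κ_mem_cochains hc.1 x, fun y hy => by rw [ι_κ, hc.2 y hy, map_zero]⟩

theorem ι_mem_horizontal (hc : c ∈ horizontal H) (x : M) : ι x c ∈ horizontal H :=
  ⟨ι_mem_cochains hc.1 x, fun y hy => by rw [ι_ι_comm hc.1, hc.2 y hy, map_zero, neg_zero]⟩

theorem kosHomotopy_mem_horizontal (hpr : LinearMap.IsProj H pr) (hc : c ∈ horizontal H) :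
    kosHomotopy pr c ∈ horizontal H := by
  refine ⟨kosHomotopy_mem_cochains pr hc.1, fun x hx => ?_⟩
  rw [ι_kosHomotopy, hpr.map_id x hx, sub_self, hc.2 x hx, map_zero, sub_zero]
  exact (contractionRelations hc.1).isLinearMap_κ.map_zero

theorem ι_numberOp_of_mem_horizontal (hpr : LinearMap.IsProj H pr) (hc : c ∈ horizontal H)
    (x : M) : ι x (numberOp pr c) = numberOp pr (ι x c) + ι x c := by
  rw [ι_numberOp pr hc.1, (contractionRelations hc.1).isLinearMap_ι.map_sub,
    hc.2 _ (hpr.map_mem x), sub_zero]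

theorem numberOp_mem_horizontal (hpr : LinearMap.IsProj H pr) (hc : c ∈ horizontal H) :
    numberOp pr c ∈ horizontal H := by
  refine ⟨numberOp_mem_cochains pr hc.1, fun x hx => ?_⟩
  rw [ι_numberOp_of_mem_horizontal hpr hc, hc.2 x hx, map_zero, add_zero]

theorem ι_aeval_numberOp (hpr : LinearMap.IsProj H pr) (hc : c ∈ horizontal H) (p : R[X]) (x : M) :
    ι x (aeval (numberOp pr) p c) = aeval (numberOp pr) (p.comp (X + C 1)) (ι x c) := by
  refine map_aeval_apply 1 (fun c => numberOp_mem_horizontal hpr) (fun c hc => ?_) p hc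
  rw [ι_numberOp_of_mem_horizontal hpr hc, one_smul]

theorem κ_aeval_numberOp (hpr : LinearMap.IsProj H pr) (hc : c ∈ cochains R M) (p : R[X]) (x : M) :
    κ x (aeval (numberOp pr) p c) =
      aeval (numberOp pr) (p.comp (X + C 1)) (κ (x - pr x) c) +
        aeval (numberOp pr) p (κ (pr x) c) := by
  have hpr_pr (x : M) : pr (pr x) = pr x := hpr.map_id _ (hpr.map_mem x)
  have hcompl : κ (x - pr x) (aeval (numberOp pr) p c) =
      aeval (numberOp pr) (p.comp (X + C 1)) (κ (x - pr x) c) := by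
    refine map_aeval_apply 1 (fun c => numberOp_mem_cochains pr) (fun c hc => ?_) p hc
    rw [κ_numberOp pr hc, map_sub, hpr_pr, sub_self, sub_zero, one_smul]
  have hrange : κ (pr x) (aeval (numberOp pr) p c) = aeval (numberOp pr) p (κ (pr x) c) := by
    have := map_aeval_apply 0 (fun c => numberOp_mem_cochains pr) (T := κ (pr x))
      (fun c hc => ?_) p hc
    · simpa using this
    · rw [κ_numberOp pr hc, hpr_pr, sub_self, zero_smul,
        (contractionRelations hc).isLinearMap_κ.map_zero]
  rw [← hcompl, ← hrange, κ_sub (aeval_mem (fun c => numberOp_mem_cochains pr) p hc),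
    sub_add_cancel]

/-- On horizontal cochains of bidegree `(i, j)` the eigenvalues of the number operator are among
`0, …, i + j`, and the projection to the `0`-eigenspace is the restriction to `H`. -/
theorem aeval_numberOp_apply (hpr : LinearMap.IsProj H pr) {i j : ℕ} {p : R[X]}
    (hp : ∀ a : ℕ, 1 ≤ a → a ≤ i + j → p.eval (a : R) = 0) (hc : c ∈ horizontal H) (v w) :
    aeval (numberOp pr) p c i j v w = p.eval 0 * c i j (pr ∘ v) (pr ∘ w) := by
  have hshift {n : ℕ} {p : R[X]} (hp : ∀ a : ℕ, 1 ≤ a → a ≤ n + 1 → p.eval (a : R) = 0) (a : ℕ)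
      (ha : a ≤ n) : (p.comp (X + C 1)).eval (a : R) = 0 := by
    simpa using hp (a + 1) (by omega) (by omega)
  induction i generalizing j p c with
  | zero =>
    induction j generalizing p c with
    | zero =>
      have hNc : numberOp pr (aeval (numberOp pr) p.divX c) 0 0 = 0 := add_zero 0
      rw [← X_mul_divX_add p, map_add, map_mul, aeval_X, aeval_C, LinearMap.add_apply,
        Module.End.mul_apply, Pi.add_apply, Pi.add_apply, hNc]
      simp [coeff_zero_eq_eval_zero, Subsingleton.elim (pr ∘ v) v, Subsingleton.elim (pr ∘ w) w]
    | succ j ih =>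
      rw [zero_add] at hp
      have hp0 : (p.comp (X + C 1)).eval 0 = 0 := by simpa using hshift hp 0 (by omega)
      rw [← Fin.cons_self_tail w, ← κ_apply (w 0) (aeval (numberOp pr) p c),
        κ_aeval_numberOp hpr hc.1, Pi.add_apply, Pi.add_apply, Pi.add_apply, Pi.add_apply,
        ih (fun a _ ha => hshift hp a (by omega)) (κ_mem_horizontal hc _),
        ih (fun a h1 ha => hp a h1 (by omega)) (κ_mem_horizontal hc _), hp0, zero_mul, zero_add,
        κ_apply]
      congr 2
      ext m
      cases m using Fin.cases <;> simp [Fin.tail]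
  | succ i ih =>
    rw [add_right_comm] at hp
    have hp0 : (p.comp (X + C 1)).eval 0 = 0 := by simpa using hshift hp 0 (by omega)
    rw [← Fin.cons_self_tail v, ← ι_apply (v 0) (aeval (numberOp pr) p c), ι_aeval_numberOp hpr hc,
      ih (fun a _ ha => hshift hp a (by omega)) (ι_mem_horizontal hc _), hp0, zero_mul,
      Fin.cons_self_tail,
      apply_eq_zero_of_mem_horizontal hc 0 (hpr.map_mem (v 0)), mul_zero]

end Horizontal

end Homotopy

section Filtration

variable {R : Type*} [CommRing R] {M : Type*} {c : WeilFamily R M} {m k : ℤ}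

variable (R M m k) in
/-- The families of total degree `m` and exterior degree at least `k`. -/
def filtration : Submodule R (WeilFamily R M) :=
  supportedIn R M fun i j => (i + 2 * j : ℤ) = m ∧ k ≤ i

theorem filtration_mono {l : ℤ} (hkl : k ≤ l) (hc : c ∈ filtration R M m l) :
    c ∈ filtration R M m k :=
  fun i j hij => hc i j (by omega)

theorem extMul_mem_filtration {f : M → WeilFamily R M} (hf : ∀ y, f y ∈ filtration R M m k) :
    extMul f ∈ filtration R M (m + 1) (k + 1) := by
  rintro (_ | i) j hij
  · exact extMul_zero_left f j
  · ext v w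
    have hzero (y : M) : f y i j = 0 := hf y i j (by omega)
    simp [extMul_succ, hzero]

theorem symMul_mem_filtration {f : M → WeilFamily R M} (hf : ∀ y, f y ∈ filtration R M m k) :
    symMul f ∈ filtration R M (m + 2) k := by
  rintro i (_ | j) hij
  · exact symMul_zero_right f i
  · ext v w
    have hzero (y : M) : f y i j = 0 := hf y i j (by omega)
    simp [symMul_succ, hzero]

theorem ι_mem_filtration (hc : c ∈ filtration R M m k) (x : M) :
    ι x c ∈ filtration R M (m - 1) (k - 1) := fun i j hij => by
  ext v w
  rw [ι_apply, hc (i + 1) j (by omega)]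
  rfl

theorem κ_mem_filtration (hc : c ∈ filtration R M m k) (x : M) :
    κ x c ∈ filtration R M (m - 2) k := fun i j hij => by
  ext v w
  rw [κ_apply, hc i (j + 1) (by omega)]
  rfl

theorem dKos_mem_filtration (hc : c ∈ filtration R M m k) :
    dKos c ∈ filtration R M (m + 1) (k - 1) :=
  (by ring : m - 1 + 2 = m + 1) ▸ symMul_mem_filtration (ι_mem_filtration hc)

theorem kosHomotopy_mem_filtration {R : Type*} [CommRing R] {M : Type*} [AddCommGroup M]
    [Module R M] (pr : M →ₗ[R] M) {c : WeilFamily R M} (hc : c ∈ filtration R M m k) :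
    kosHomotopy pr c ∈ filtration R M (m - 1) (k + 1) :=
  (by ring : m - 2 + 1 = m - 1) ▸ extMul_mem_filtration fun y => κ_mem_filtration hc (y - pr y)

theorem numberOp_mem_filtration {R : Type*} [CommRing R] {M : Type*} [AddCommGroup M]
    [Module R M] (pr : M →ₗ[R] M) {c : WeilFamily R M} (hc : c ∈ filtration R M m k) :
    numberOp pr c ∈ filtration R M m k := by
  rw [← dKos_kosHomotopy]
  refine add_mem ?_ ?_
  · simpa using dKos_mem_filtration (kosHomotopy_mem_filtration pr hc)
  · simpa using kosHomotopy_mem_filtration pr (dKos_mem_filtration hc)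

theorem dLie_mem_filtration {F : Type*} [Field F] {g : Type*} [LieRing g] {c : WeilFamily F g}
    (hc : c ∈ filtration F g m k) : dLie c ∈ filtration F g (m + 1) (k + 1) := by
  rintro (_ | i) j hij
  · exact dLie_zero_left c j
  · have hzero : c i j = 0 := hc i j (by omega)
    ext v w
    simp [dLie, dExt, extMul_succ, lieSym, dTrivW, hzero]

theorem weilD_mem_filtration {F : Type*} [Field F] {g : Type*} [LieRing g] {c : WeilFamily F g}
    (hc : c ∈ filtration F g m k) : weilD c ∈ filtration F g (m + 1) (k - 1) :=
  add_mem (filtration_mono (by omega) (dLie_mem_filtration hc)) (dKos_mem_filtration hc)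

end Filtration

section Laplacian

variable {F : Type*} [Field F] {g : Type*} [LieRing g] [LieAlgebra F g] {m k : ℤ}

/-- The basic Weil cochains of the pair `(g, h)`: those annihilated by the contractions and the
Lie derivatives with respect to `h`. -/
def basic (h : LieSubalgebra F g) : Submodule F (WeilFamily F g) where
  carrier := {c | c ∈ horizontal h.toSubmodule ∧ ∀ x ∈ h, lieDer x c = 0}
  add_mem' ha hb := ⟨add_mem ha.1 hb.1, fun x hx => by simp [ha.2 x hx, hb.2 x hx]⟩
  zero_mem' := ⟨zero_mem _, fun _ _ => map_zero _⟩
  smul_mem' s _ ha := ⟨Submodule.smul_mem _ s ha.1, fun x hx => by simp [ha.2 x hx]⟩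

theorem isProj_of_isEqProj {h : LieSubalgebra F g} {pr : g →ₗ[F] g} (hpr : IsEqProj F g h pr) :
    LinearMap.IsProj h.toSubmodule pr :=
  ⟨hpr.1, hpr.2.1⟩

/-- The commutator of the Weil differential with the Koszul homotopy, a deformation of the number
operator. -/
def laplacian (pr : g →ₗ[F] g) : Module.End F (WeilFamily F g) :=
  weilD ∘ₗ kosHomotopy pr + kosHomotopy pr ∘ₗ weilD

variable {h : LieSubalgebra F g} {pr : g →ₗ[F] g} {c : WeilFamily F g}

theorem weilD_mem_basic (hc : c ∈ basic h) : weilD c ∈ basic h := by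
  refine ⟨⟨weilD_mem_cochains hc.1.1, fun x hx => ?_⟩, fun x hx => ?_⟩
  · rw [ι_weilD hc.1.1, hc.2 x hx, hc.1.2 x hx, map_zero, sub_zero]
  · rw [lieDer_weilD hc.1.1, hc.2 x hx, map_zero]

theorem lieDer_kosHomotopy (hpr : IsEqProj F g h pr) {x : g} (hx : x ∈ h) (c : WeilFamily F g) :
    lieDer x (kosHomotopy pr c) = kosHomotopy pr (lieDer x c) := by
  simp only [kosHomotopy_apply, lieDer_extMul, κ_lieDer, lie_sub, hpr.2.2 x hx]

theorem kosHomotopy_mem_basic (hpr : IsEqProj F g h pr) (hc : c ∈ basic h) :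
    kosHomotopy pr c ∈ basic h :=
  ⟨kosHomotopy_mem_horizontal (isProj_of_isEqProj hpr) hc.1, fun x hx => by
    rw [lieDer_kosHomotopy hpr hx, hc.2 x hx, map_zero]⟩

theorem laplacian_apply (pr : g →ₗ[F] g) (c : WeilFamily F g) :
    laplacian pr c = weilD (kosHomotopy pr c) + kosHomotopy pr (weilD c) := rfl

theorem laplacian_mem_basic (hpr : IsEqProj F g h pr) (hc : c ∈ basic h) :
    laplacian pr c ∈ basic h :=
  add_mem (weilD_mem_basic (kosHomotopy_mem_basic hpr hc))
    (kosHomotopy_mem_basic hpr (weilD_mem_basic hc))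

theorem laplacian_mem_cochains (pr : g →ₗ[F] g) (hc : c ∈ cochains F g) :
    laplacian pr c ∈ cochains F g :=
  add_mem (weilD_mem_cochains (kosHomotopy_mem_cochains pr hc))
    (kosHomotopy_mem_cochains pr (weilD_mem_cochains hc))

theorem laplacian_mem_filtration (pr : g →ₗ[F] g) (hc : c ∈ filtration F g m k) :
    laplacian pr c ∈ filtration F g m k := by
  refine add_mem ?_ ?_
  · simpa using weilD_mem_filtration (kosHomotopy_mem_filtration pr hc)
  · simpa using kosHomotopy_mem_filtration pr (weilD_mem_filtration hc)

theorem laplacian_sub_numberOp_mem_filtration (pr : g →ₗ[F] g) (hc : c ∈ filtration F g m k) :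
    laplacian pr c - numberOp pr c ∈ filtration F g m (k + 1) := by
  have hsub : laplacian pr c - numberOp pr c =
      dLie (kosHomotopy pr c) + kosHomotopy pr (dLie c) := by
    simp only [laplacian_apply, weilD_apply, ← dKos_kosHomotopy, map_add]
    abel
  have hmem : dLie (kosHomotopy pr c) + kosHomotopy pr (dLie c) ∈
      filtration F g m (k + 1 + 1) := by
    refine add_mem ?_ ?_
    · simpa using dLie_mem_filtration (kosHomotopy_mem_filtration pr hc)
    · simpa using kosHomotopy_mem_filtration pr (dLie_mem_filtration hc)
  exact hsub ▸ filtration_mono (by omega) hmem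

theorem weilD_aeval_laplacian (pr : g →ₗ[F] g) (hc : c ∈ cochains F g) (p : F[X]) :
    weilD (aeval (laplacian pr) p c) = aeval (laplacian pr) p (weilD c) := by
  have hcomm (c : WeilFamily F g) (hc : c ∈ cochains F g) :
      weilD (laplacian pr c) = laplacian pr (weilD c) + (0 : F) • weilD c := by
    rw [laplacian_apply, laplacian_apply, map_add, weilD_weilD hc,
      weilD_weilD (kosHomotopy_mem_cochains pr hc), map_zero, zero_add, add_zero, zero_smul,
      add_zero]
  simpa using map_aeval_apply 0 (fun c => laplacian_mem_cochains pr) hcomm p hc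

section Vanishing

variable {n : ℕ} {p : F[X]}

theorem aeval_numberOp_eq_zero (hpr : IsEqProj F g h pr)
    (hp : ∀ a : ℕ, 1 ≤ a → a ≤ n → p.eval (a : F) = 0)
    (hc : c ∈ basic h ⊓ filtration F g n k)
    (hzero : ∀ j v w, (∀ r, w r ∈ h) → c 0 j v w = 0) : aeval (numberOp pr) p c = 0 := by
  ext i j v w
  by_cases hij : i + 2 * j = n
  · rw [aeval_numberOp_apply (isProj_of_isEqProj hpr) (fun a h1 ha => hp a h1 (by omega)) hc.1.1]
    cases i with
    | zero => exact mul_eq_zero_of_right _ (hzero j _ _ fun r => hpr.1 (w r))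
    | succ i =>
      rw [apply_eq_zero_of_mem_horizontal hc.1.1 0 (hpr.1 (v 0)), mul_zero]
      rfl
  · rw [aeval_mem (fun c => numberOp_mem_filtration pr) p hc.2 i j (by omega)]
    rfl

theorem aeval_laplacian_mem_filtration (hpr : IsEqProj F g h pr)
    (hp : ∀ a : ℕ, 1 ≤ a → a ≤ n → p.eval (a : F) = 0)
    (hc : c ∈ basic h ⊓ filtration F g n k)
    (hzero : ∀ j v w, (∀ r, w r ∈ h) → c 0 j v w = 0) :
    aeval (laplacian pr) p c ∈ filtration F g n (k + 1) := by
  have hsub := aeval_sub_aeval_mem (fun c => laplacian_mem_filtration pr)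
    (fun c => numberOp_mem_filtration pr) (fun c => laplacian_sub_numberOp_mem_filtration pr)
    p hc.2
  rwa [aeval_numberOp_eq_zero hpr hp hc hzero, sub_zero] at hsub

theorem aeval_laplacian_pow_mem (hpr : IsEqProj F g h pr)
    (hp : ∀ a : ℕ, 1 ≤ a → a ≤ n → p.eval (a : F) = 0)
    (hc : c ∈ basic h ⊓ filtration F g n 0)
    (hzero : ∀ j v w, (∀ r, w r ∈ h) → c 0 j v w = 0) (k : ℕ) :
    aeval (laplacian pr) (p ^ k) c ∈ basic h ⊓ filtration F g n k := by
  induction k with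
  | zero => simpa using hc
  | succ k ih =>
    refine ⟨aeval_mem (fun c => laplacian_mem_basic hpr) _ hc.1, ?_⟩
    rw [pow_succ', map_mul, Module.End.mul_apply, Nat.cast_succ]
    refine aeval_laplacian_mem_filtration hpr hp ih fun j v w hw => ?_
    cases k with
    | zero => simpa using hzero j v w hw
    | succ k => rw [ih.2 0 j (by omega)]; rfl

end Vanishing

/-- An annihilating polynomial of the Laplacian with nonzero constant term inverts it up to
homotopy. -/
theorem exists_weilD_eq [CharZero F] (hpr : IsEqProj F g h pr) {n : ℕ}
    (hc : c ∈ basic h ⊓ filtration F g n 0) (hd : weilD c = 0)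
    (hzero : ∀ j v w, (∀ r, w r ∈ h) → c 0 j v w = 0) :
    ∃ b ∈ basic h ⊓ filtration F g (n - 1) 0, weilD b = c := by
  set p : F[X] := ∏ a ∈ Finset.Icc 1 n, (X - C (a : F))
  set q : F[X] := p ^ (n + 1)
  have hp (a : ℕ) (h1 : 1 ≤ a) (ha : a ≤ n) : p.eval (a : F) = 0 := by
    rw [eval_prod]
    exact Finset.prod_eq_zero (Finset.mem_Icc.2 ⟨h1, ha⟩) (by simp)
  have hq0 : q.coeff 0 ≠ 0 := by
    rw [coeff_zero_eq_eval_zero, eval_pow, eval_prod]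
    refine pow_ne_zero _ (Finset.prod_ne_zero_iff.2 fun a ha => ?_)
    simpa using Nat.one_le_iff_ne_zero.1 (Finset.mem_Icc.1 ha).1
  have hqc : aeval (laplacian pr) q c = 0 := by
    ext1 i; ext1 j
    exact (aeval_laplacian_pow_mem hpr hp hc hzero (n + 1)).2 i j (by omega)
  set u := aeval (laplacian pr) q.divX c
  have hu : u ∈ basic h ⊓ filtration F g n 0 :=
    ⟨aeval_mem (fun c => laplacian_mem_basic hpr) _ hc.1,
      aeval_mem (fun c => laplacian_mem_filtration pr) _ hc.2⟩
  have hdu : weilD u = 0 := by rw [weilD_aeval_laplacian pr hc.1.1.1, hd, map_zero]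
  have hlap : weilD (kosHomotopy pr u) = -(q.coeff 0 • c) := by
    rw [← X_mul_divX_add q, map_add, map_mul, aeval_X, aeval_C, LinearMap.add_apply,
      Module.End.mul_apply, laplacian_apply, hdu, map_zero, add_zero] at hqc
    exact eq_neg_of_add_eq_zero_left hqc
  refine ⟨-(q.coeff 0)⁻¹ • kosHomotopy pr u, Submodule.smul_mem _ _
    ⟨kosHomotopy_mem_basic hpr hu.1,
      filtration_mono (by omega) (kosHomotopy_mem_filtration pr hu.2)⟩, ?_⟩
  rw [map_smul, hlap, smul_neg, neg_smul, neg_neg, inv_smul_smul₀ hq0]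

end Laplacian

section FormCriteria

variable {R : Type*} [CommRing R] {M : Type*} [AddCommGroup M] [Module R M] {n : ℕ}
  {P : (Fin n → M) → R}

theorem mem_altForms_iff : P ∈ altForms R M n ↔
    (∀ v t x y, P (Function.update v t (x + y)) =
      P (Function.update v t x) + P (Function.update v t y)) ∧
    (∀ v t (s : R) x, P (Function.update v t (s • x)) = s * P (Function.update v t x)) ∧
    ∀ v t t', t ≠ t' → v t = v t' → P v = 0 := by
  constructor
  · rintro ⟨a, rfl⟩
    exact ⟨fun v => a.map_update_add v, fun v => a.map_update_smul v,
      fun v t t' ht hv => a.map_eq_zero_of_eq v hv ht⟩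
  · rintro ⟨hadd, hsmul, halt⟩
    exact ⟨⟨MultilinearMap.mk' P hadd hsmul, fun v t t' hv ht => halt v t t' ht hv⟩, rfl⟩

theorem mem_symForms_iff : P ∈ symForms R M n ↔
    (∀ w r x y, P (Function.update w r (x + y)) =
      P (Function.update w r x) + P (Function.update w r y)) ∧
    (∀ w r (s : R) x, P (Function.update w r (s • x)) = s * P (Function.update w r x)) ∧
    ∀ w (ρ : Equiv.Perm (Fin n)), P (w ∘ ρ) = P w := by
  constructor
  · rintro ⟨s, rfl, hs⟩
    exact ⟨fun w => s.map_update_add w, fun w => s.map_update_smul w, fun w ρ => hs ρ w⟩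
  · rintro ⟨hadd, hsmul, hperm⟩
    exact ⟨MultilinearMap.mk' P hadd hsmul, rfl, fun ρ w => hperm w ρ⟩

end FormCriteria

section RelativeWeilAlgebra

variable {F : Type*} [Field F] {g : Type*} [LieRing g] [LieAlgebra F g] {h : LieSubalgebra F g}
  {c : WeilFamily F g} {m : ℕ}

theorem isWCochain_of_mem_basic (hc : c ∈ basic h) (i j : ℕ) : IsWCochain F g h i j (c i j) := by
  have halt w := mem_altForms_iff.1 (hc.1.1.1 i j w)
  have hsym v := mem_symForms_iff.1 (hc.1.1.2 i j v)
  refine ⟨fun v t x y w => (halt w).1 v t x y, fun v t s x w => (halt w).2.1 v t s x,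
    fun v t t' w => (halt w).2.2 v t t', fun v => (hsym v).1, fun v => (hsym v).2.1,
    fun v => (hsym v).2.2, fun v t w => apply_eq_zero_of_mem_horizontal hc.1 t,
    fun x hx v w => ?_⟩
  have hinv : lieDer x c i j v w = 0 := by rw [hc.2 x hx]; rfl
  rw [← neg_eq_zero, neg_add]
  exact hinv

theorem mem_basic_of_isWCochain (hc : ∀ i j, IsWCochain F g h i j (c i j)) : c ∈ basic h := by
  refine ⟨⟨⟨fun i j w => ?_, fun i j v => ?_⟩, fun x hx => ?_⟩, fun x hx => ?_⟩
  · obtain ⟨hadd, hsmul, halt, -⟩ := hc i j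
    exact mem_altForms_iff.2 ⟨fun v t x y => hadd v t x y w, fun v t s x => hsmul v t s x w,
      fun v t t' => halt v t t' w⟩
  · obtain ⟨-, -, -, hadd, hsmul, hperm, -⟩ := hc i j
    exact mem_symForms_iff.2 ⟨hadd v, hsmul v, hperm v⟩
  · ext i j v w
    obtain ⟨-, -, -, -, -, -, hhor, -⟩ := hc (i + 1) j
    exact hhor (Fin.cons x v) 0 w hx
  · ext i j v w
    obtain ⟨-, -, -, -, -, -, -, hinv⟩ := hc i j
    exact (neg_add _ _).symm.trans (neg_eq_zero.2 (hinv x hx v w))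

theorem isWElt_iff : IsWElt F g h m c ↔ c ∈ basic h ⊓ filtration F g m 0 :=
  ⟨fun hc => ⟨mem_basic_of_isWCochain hc.1, fun i j hij => hc.2 i j (by omega)⟩,
    fun hc => ⟨isWCochain_of_mem_basic hc.1, fun i j hij => hc.2 i j (by omega)⟩⟩

theorem isWCobd_iff :
    IsWCobd F g h m c ↔ ∃ b ∈ basic h ⊓ filtration F g (m - 1) 0, weilD b = c := by
  cases m with
  | zero =>
    constructor
    · intro hc
      exact ⟨0, zero_mem _, by ext1 i; ext1 j; rw [map_zero, hc i j]; rfl⟩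
    · rintro ⟨b, hb, rfl⟩
      have hb0 : b = 0 := by
        ext1 i; ext1 j
        exact hb.2 i j (by omega)
      simp [IsWCobd, hb0]
  | succ m =>
    simp only [IsWCobd, isWElt_iff, dWeil_eq, Nat.cast_succ, add_sub_cancel_right]

theorem apply_eq_zero_of_isWCobd (hc : IsWCobd F g h m c) (j : ℕ) (v : Fin 0 → g) {w : Fin j → g}
    (hw : ∀ r, w r ∈ h) : c 0 j v w = 0 := by
  obtain ⟨b, hb, rfl⟩ := isWCobd_iff.1 hc
  rw [weilD_apply, Pi.add_apply, Pi.add_apply, dLie_zero_left, zero_add, dKos_apply]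
  cases j with
  | zero => rfl
  | succ j =>
    rw [symMul_succ]
    refine Finset.sum_eq_zero fun r _ => ?_
    rw [hb.1.1.2 _ (hw r)]
    rfl

theorem isRelTrivCobdW_of_isWCobd (hc : IsWCobd F g h m c) :
    IsRelTrivCobdW F g h m fun v => c m 0 v Fin.elim0 := by
  cases m with
  | zero => ext v; rw [hc 0 0]; rfl
  | succ m =>
    obtain ⟨b, ⟨hb, -⟩, rfl⟩ := hc
    obtain ⟨hadd, hsmul, halt, -, -, -, hhor, hinv⟩ := hb m 0
    refine ⟨fun v => b m 0 v Fin.elim0, ⟨fun v t x y => hadd v t x y _,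
      fun v t s x => hsmul v t s x _, fun v t t' => halt v t t' _, fun v t => hhor v t _,
      fun x hx v => ?_⟩, ?_⟩
    · simpa using hinv x hx v Fin.elim0
    · ext v
      simp [dWeil, dLieS, dTrivW]

end RelativeWeilAlgebra

section CharacteristicMap

variable {F : Type*} [Field F] {g : Type*} [LieRing g] [LieAlgebra F g]
  {h : LieSubalgebra F g} {pr pr' : g →ₗ[F] g} {j : ℕ} {P : (Fin j → g) → F}

theorem mem_symForms_of_isSymPoly (hP : IsSymPoly F g h j P) : P ∈ symForms F g j :=
  mem_symForms_iff.2 ⟨hP.1, hP.2.1, hP.2.2.1⟩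

theorem lieDer_ofForm_apply_eq_zero (hP : IsSymPoly F g h j P) {x : g} (hx : x ∈ h)
    (v : Fin 0 → g) {w : Fin j → g} (hw : ∀ r, w r ∈ h) : lieDer x (ofForm j P) 0 j v w = 0 := by
  rw [lieDer, LinearMap.add_apply, Pi.add_apply, Pi.add_apply, lieExt_zero_left, zero_add]
  simpa [lieSym, ofForm_zero_left] using hP.2.2.2 x hx w hw

theorem isSymPoly_of_isWCochain {c : (Fin 0 → g) → (Fin j → g) → F}
    (hc : IsWCochain F g h 0 j c) : IsSymPoly F g h j (c Fin.elim0) := by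
  obtain ⟨-, -, -, hadd, hsmul, hperm, -, hinv⟩ := hc
  exact ⟨hadd _, hsmul _, hperm _, fun x hx w _ => by simpa using hinv x hx Fin.elim0 w⟩

theorem chiW_apply_of_mem (hpr : IsEqProj F g h pr) (P : (Fin j → g) → F) (v : Fin 0 → g)
    {w : Fin j → g} (hw : ∀ r, w r ∈ h) : chiW F g pr j P 0 j v w = P w := by
  rw [chiW_zero_left]
  exact congrArg P (funext fun r => hpr.2.1 _ (hw r))

theorem chiW_injective (hpr : IsEqProj F g h pr)
    (hcob : IsWCobd F g h (2 * j) (chiW F g pr j P)) {w : Fin j → g} (hw : ∀ r, w r ∈ h) :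
    P w = 0 :=
  (chiW_apply_of_mem hpr P Fin.elim0 hw).symm.trans (apply_eq_zero_of_isWCobd hcob j _ hw)

variable [CharZero F]

theorem chiW_mem (hpr : IsEqProj F g h pr) (hP : IsSymPoly F g h j P) :
    chiW F g pr j P ∈ basic h ⊓ filtration F g (2 * j : ℕ) 0 := by
  refine ⟨?_, fun i j' hij => ?_⟩
  · have hc := ofForm_mem_polys (mem_symForms_of_isSymPoly hP)
    rw [chiW_eq_chern pr (mem_symForms_of_isSymPoly hP)]
    exact ⟨⟨chern_mem_cochains pr hc.1 j, fun x hx => ι_chern_eq_zero hpr hc hx⟩,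
      fun x hx => lieDer_chern_eq_zero hpr hc
        (fun x hx v w => lieDer_ofForm_apply_eq_zero hP hx v) hx⟩
  · ext v w
    exact dif_neg (by omega)

theorem weilD_chiW (hpr : IsEqProj F g h pr) (hP : IsSymPoly F g h j P) :
    weilD (chiW F g pr j P) = 0 := by
  rw [chiW_eq_chern pr (mem_symForms_of_isSymPoly hP)]
  exact weilD_chern_eq_zero hpr (ofForm_mem_polys (mem_symForms_of_isSymPoly hP))
    fun x hx v w => lieDer_ofForm_apply_eq_zero hP hx v

theorem isWCobd_of_weilD_eq_zero (hpr : IsEqProj F g h pr) {c : WeilFamily F g}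
    (hc : c ∈ basic h ⊓ filtration F g (2 * j : ℕ) 0) (hd : weilD c = 0)
    (hzero : ∀ v w, (∀ r, w r ∈ h) → c 0 j v w = 0) : IsWCobd F g h (2 * j) c := by
  refine isWCobd_iff.2 (exists_weilD_eq hpr hc hd fun j' v w hw => ?_)
  by_cases hj : j' = j
  · subst hj
    exact hzero v w hw
  · rw [hc.2 0 j' (by omega)]
    rfl

theorem chiW_closed (hpr : IsEqProj F g h pr) (hP : IsSymPoly F g h j P) :
    IsWElt F g h (2 * j) (chiW F g pr j P) ∧
      ∀ i j', dWeil F g (chiW F g pr j P) i j' = 0 := by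
  refine ⟨isWElt_iff.2 (chiW_mem hpr hP), fun i j' => ?_⟩
  rw [dWeil_eq, weilD_chiW hpr hP]
  rfl

theorem chiW_surjective (hpr : IsEqProj F g h pr) {W : WeilFamily F g}
    (hW : IsWElt F g h (2 * j) W) (hdW : ∀ i j', dWeil F g W i j' = 0) :
    ∃ P, IsSymPoly F g h j P ∧ IsWCobd F g h (2 * j) (W - chiW F g pr j P) := by
  have hP := isSymPoly_of_isWCochain (hW.1 0 j)
  refine ⟨_, hP, isWCobd_of_weilD_eq_zero hpr (sub_mem (isWElt_iff.1 hW) (chiW_mem hpr hP)) ?_ ?_⟩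
  · rw [map_sub, weilD_chiW hpr hP, sub_zero, ← dWeil_eq]
    ext1 i; ext1 j'
    exact hdW i j'
  · intro v w hw
    rw [Pi.sub_apply, Pi.sub_apply, Pi.sub_apply, Pi.sub_apply, chiW_apply_of_mem hpr _ v hw,
      Subsingleton.elim v Fin.elim0, sub_self]

theorem chernW_sub_isRelTrivCobdW (hpr : IsEqProj F g h pr) (hpr' : IsEqProj F g h pr')
    (hP : IsSymPoly F g h j P) :
    IsRelTrivCobdW F g h (2 * j) fun v => chernW F g pr j P v - chernW F g pr' j P v := by
  have hcob : IsWCobd F g h (2 * j) (chiW F g pr j P - chiW F g pr' j P) := by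
    refine isWCobd_of_weilD_eq_zero hpr (sub_mem (chiW_mem hpr hP) (chiW_mem hpr' hP)) ?_ ?_
    · rw [map_sub, weilD_chiW hpr hP, weilD_chiW hpr' hP, sub_zero]
    · intro v w hw
      rw [Pi.sub_apply, Pi.sub_apply, Pi.sub_apply, Pi.sub_apply, chiW_apply_of_mem hpr P v hw,
        chiW_apply_of_mem hpr' P v hw, sub_self]
  simpa only [Pi.sub_apply, chiW_zero_right] using isRelTrivCobdW_of_isWCobd hcob

end CharacteristicMap

end WeilFamily

theorem chiW_iso_general (F : Type*) [Field F] [CharZero F] (g : Type*) [LieRing g]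
    [LieAlgebra F g] (h : LieSubalgebra F g) (pr : g →ₗ[F] g) (hpr : IsEqProj F g h pr) (j : ℕ) :
    (∀ P, IsSymPoly F g h j P →
      IsWElt F g h (2 * j) (chiW F g pr j P) ∧
        (∀ i j', dWeil F g (chiW F g pr j P) i j' = 0)) ∧
    (∀ P, IsSymPoly F g h j P → IsWCobd F g h (2 * j) (chiW F g pr j P) →
      ∀ w : Fin j → g, (∀ r, w r ∈ h) → P w = 0) ∧
    (∀ W, IsWElt F g h (2 * j) W → (∀ i j', dWeil F g W i j' = 0) →
      ∃ P, IsSymPoly F g h j P ∧ IsWCobd F g h (2 * j) (W - chiW F g pr j P)) ∧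
    (∀ (P : (Fin j → g) → F) (v : Fin (2 * j) → g),
      chiW F g pr j P (2 * j) 0 v Fin.elim0 = chernW F g pr j P v) ∧
    (∀ pr' : g →ₗ[F] g, IsEqProj F g h pr' → ∀ P, IsSymPoly F g h j P →
      IsRelTrivCobdW F g h (2 * j) (fun v => chernW F g pr j P v - chernW F g pr' j P v)) :=
  ⟨fun _ => WeilFamily.chiW_closed hpr,
    fun _ _ hcob _ => WeilFamily.chiW_injective hpr hcob,
    fun _ => WeilFamily.chiW_surjective hpr,
    fun P v => WeilFamily.chiW_zero_right pr P v Fin.elim0,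
    fun _ hpr' _ => WeilFamily.chernW_sub_isRelTrivCobdW hpr hpr'⟩

/-- let `g` be a Lie algebra over a field of characteristic zero and
`h ⊂ g` a finite-dimensional subalgebra admitting an `ad(h)`-invariant complement. Then
for every `j ≥ 0` the characteristic homomorphism `χ_W : (S^j h)^{*h} → H^{2j}(W(g,h))` is
an isomorphism; its composition with `H(W(g,h)) → H(g,h)` sends `P` to the class of the
explicit relative Chern–Weil cocycle `χ(P)` built out of the curvature
`C(v,w) = [pr v, pr w] − pr[v,w]` of any `ad(h)`-equivariant projection `pr : g → h`,
and in particular the class of `χ(P)` is independent of the choice of `pr`. -/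
theorem chiW_iso (F : Type*) [Field F] [CharZero F]
    (g : Type*) [LieRing g] [LieAlgebra F g]
    (h : LieSubalgebra F g) [FiniteDimensional F h]
    (V : Submodule F g) (hV : ∀ X ∈ h, ∀ v ∈ V, ⁅X, v⁆ ∈ V)
    (hcompl : IsCompl h.toSubmodule V) :
    ∀ pr : g →ₗ[F] g, IsEqProj F g h pr → ∀ j : ℕ,
      -- χ_W(P) is a closed element of the Weil algebra of degree 2j:
      (∀ P, IsSymPoly F g h j P →
        IsWElt F g h (2*j) (chiW F g pr j P) ∧
          (∀ i j', dWeil F g (chiW F g pr j P) i j' = 0)) ∧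
      -- injectivity of χ_W:
      (∀ P, IsSymPoly F g h j P → IsWCobd F g h (2*j) (chiW F g pr j P) →
        ∀ w : Fin j → g, (∀ r, w r ∈ h) → P w = 0) ∧
      -- surjectivity of χ_W:
      (∀ W, IsWElt F g h (2*j) W → (∀ i j', dWeil F g W i j' = 0) →
        ∃ P, IsSymPoly F g h j P ∧ IsWCobd F g h (2*j) (W - chiW F g pr j P)) ∧
      -- the projection of χ_W(P) to C(g,h) is the explicit Chern–Weil cocycle χ(P):
      (∀ (P : (Fin j → g) → F) (v : Fin (2*j) → g),
        chiW F g pr j P (2*j) 0 v Fin.elim0 = chernW F g pr j P v) ∧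
      -- the class of χ(P) does not depend on the choice of equivariant projection:
      (∀ pr' : g →ₗ[F] g, IsEqProj F g h pr' → ∀ P, IsSymPoly F g h j P →
        IsRelTrivCobdW F g h (2*j)
          (fun v => chernW F g pr j P v - chernW F g pr' j P v)) := by
  intro pr hpr j
  exact chiW_iso_general F g h pr hpr j

end
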